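/- arXiv:1311.7092 — 2 statements merged into one kernel-verified Lean document; each statement's English description precedes it below -/
import Mathlib

section
/- Let n ≥ 2, set G := g_{σ_n}g_{σ_{n−1}}⋯g_{σ_1}g_{a_{n+1}} ∈ TLhat_{n+1}(q), and let τ, τ' be traces on TLhat_{n+1}(q). If τ(m) = τ'(m) for every Markov element m of TLhat_{n+1}(q) and τ(G^k) = τ'(G^k) for every integer k ≥ 1, then τ = τ'. -/
namespace AffineTL

open FreeAlgebra

/-- Cyclic successor on `Fin m`. -/
def csucc {m : ℕ} (i : Fin m) : Fin m := ⟨(i.val + 1) % m, Nat.mod_lt _ i.pos⟩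

/-- The defining relations of the affine Temperley–Lieb algebra `TLhat_m(q)` with `m`
generators (indexed so that `g_{σ_i}` has index `i - 1` and `g_{a_m}` has index `m - 1`).
For `m = 1` the unique generator is set to `0`, so that `TLhat_1(q) ≅ K`. -/
inductive ATLRel {K : Type*} [CommRing K] (q : K) (m : ℕ) :
    FreeAlgebra K (Fin m) → FreeAlgebra K (Fin m) → Prop
  | degen (h : m ≤ 1) (i : Fin m) : ATLRel q m (ι K i) 0
  | quad (h : 2 ≤ m) (i : Fin m) :
      ATLRel q m (ι K i * ι K i) ((q - 1) • ι K i + algebraMap K _ q)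
  | comm (h : 3 ≤ m) (i j : Fin m) (h1 : i ≠ j) (h2 : j ≠ csucc i) (h3 : i ≠ csucc j) :
      ATLRel q m (ι K i * ι K j) (ι K j * ι K i)
  | braid (h : 3 ≤ m) (i : Fin m) :
      ATLRel q m (ι K i * ι K (csucc i) * ι K i) (ι K (csucc i) * ι K i * ι K (csucc i))
  | vrel (h : 3 ≤ m) (i : Fin m) :
      ATLRel q m (ι K i * ι K (csucc i) * ι K i + ι K i * ι K (csucc i) + ι K (csucc i) * ι K i
        + ι K i + ι K (csucc i) + 1) 0

/-- The affine Temperley–Lieb algebra `TLhat_m(q)` of type `Ã`. -/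
abbrev ATL (K : Type*) [CommRing K] (q : K) (m : ℕ) : Type _ := RingQuot (ATLRel q m)

/-- The generators of `TLhat_m(q)`. -/
noncomputable def g {K : Type*} [CommRing K] (q : K) (m : ℕ) (i : Fin m) : ATL K q m :=
  RingQuot.mkAlgHom K (ATLRel q m) (ι K i)

/-- The defining relations of the type `A` Temperley–Lieb algebra `TL_n(q)` with `n`
generators (`g_{σ_i}` has index `i - 1`). -/
inductive TLARel {K : Type*} [CommRing K] (q : K) (n : ℕ) :
    FreeAlgebra K (Fin n) → FreeAlgebra K (Fin n) → Prop
  | quad (i : Fin n) :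
      TLARel q n (ι K i * ι K i) ((q - 1) • ι K i + algebraMap K _ q)
  | comm (i j : Fin n) (h : i.val + 2 ≤ j.val ∨ j.val + 2 ≤ i.val) :
      TLARel q n (ι K i * ι K j) (ι K j * ι K i)
  | braid (i j : Fin n) (h : j.val = i.val + 1) :
      TLARel q n (ι K i * ι K j * ι K i) (ι K j * ι K i * ι K j)
  | vrel (i j : Fin n) (h : j.val = i.val + 1) :
      TLARel q n (ι K i * ι K j * ι K i + ι K i * ι K j + ι K j * ι K i
        + ι K i + ι K j + 1) 0

/-- The type `A` Temperley–Lieb algebra `TL_n(q)`. -/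
abbrev TLA (K : Type*) [CommRing K] (q : K) (n : ℕ) : Type _ := RingQuot (TLARel q n)

/-- The generators of `TL_n(q)`. -/
noncomputable def gA {K : Type*} [CommRing K] (q : K) (n : ℕ) (i : Fin n) : TLA K q n :=
  RingQuot.mkAlgHom K (TLARel q n) (ι K i)

/-- The formal inverse `q⁻¹·(x − (q−1))` of an element satisfying `x² = (q−1)x + q`. -/
noncomputable def qinv {K : Type*} [CommRing K] (q : K) {A : Type*} [Ring A] [Algebra K A]
    (x : A) : A :=
  Ring.inverse q • (x - algebraMap K A (q - 1))

/-- A trace on a `K`-algebra: a `K`-linear form vanishing on commutators. -/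
def IsTrace {K : Type*} [CommRing K] {A : Type*} [Ring A] [Algebra K A]
    (τ : A →ₗ[K] K) : Prop :=
  ∀ x y : A, τ (x * y) = τ (y * x)

/-- The element `G = g_{σ_n}⋯g_{σ_1}·g_{a_{n+1}}` of `TLhat_{n+1}(q)`. -/
noncomputable def bigG {K : Type*} [CommRing K] (q : K) (n : ℕ) : ATL K q (n + 1) :=
  (List.ofFn fun j : Fin n => g q (n + 1) ⟨n - 1 - j.val, by omega⟩).prod *
    g q (n + 1) (Fin.last n)

/-- The inverse `G⁻¹ = g_{a_{n+1}}⁻¹·g_{σ_1}⁻¹⋯g_{σ_n}⁻¹` of `bigG`. -/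
noncomputable def bigGinv {K : Type*} [CommRing K] (q : K) (n : ℕ) : ATL K q (n + 1) :=
  qinv q (g q (n + 1) (Fin.last n)) *
    (List.ofFn fun j : Fin n => qinv q (g q (n + 1) j.castSucc)).prod

end AffineTL

namespace AffineTL

/-- `F` is the canonical homomorphism `F_m : TLhat_m(q) → TLhat_{m+1}(q)`:
`t_{σ_i} ↦ g_{σ_i}` for `1 ≤ i ≤ m−1` and `t_{a_m} ↦ g_{σ_m}·g_{a_{m+1}}·g_{σ_m}⁻¹`. -/
def isF {K : Type*} [CommRing K] (q : K) (m : ℕ) (hm : 2 ≤ m)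
    (F : ATL K q m →ₐ[K] ATL K q (m + 1)) : Prop :=
  (∀ i : ℕ, ∀ hi : i < m - 1,
      F (g q m ⟨i, by omega⟩) = g q (m + 1) ⟨i, by omega⟩) ∧
  F (g q m ⟨m - 1, by omega⟩) =
    g q (m + 1) ⟨m - 1, by omega⟩ * g q (m + 1) ⟨m, by omega⟩ *
      qinv q (g q (m + 1) ⟨m - 1, by omega⟩)

end AffineTL

namespace AffineTL

/-- A Markov element of `TLhat_{n+1}(q)`: an element of the form `A·g_{σ_n}^ε·B` with
`A, B` in the image of `F_n` and `ε ∈ {0, 1}`. -/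
def IsMarkov {K : Type*} [CommRing K] {q : K} (n : ℕ) (hn : 1 ≤ n)
    (F : ATL K q n →ₐ[K] ATL K q (n + 1)) (x : ATL K q (n + 1)) : Prop :=
  ∃ a b : ATL K q (n + 1), a ∈ F.range ∧ b ∈ F.range ∧
    (x = a * b ∨ x = a * g q (n + 1) ⟨n - 1, by omega⟩ * b)

end AffineTL

namespace TLWords

open scoped List

/-- Cyclic successor of a letter in `0..n`. -/
def sc (n i : ℕ) : ℕ := if i = n then 0 else i + 1
/-- Cyclic predecessor of a letter in `0..n`. -/
def pr (n i : ℕ) : ℕ := if i = 0 then n else i - 1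

/-- The monomial attached to a word. -/
def W {A : Type*} [Ring A] (e : ℕ → A) (l : List ℕ) : A := (l.map e).prod

/-- Temperley–Lieb relations for letters `0..n` placed on a cycle. -/
structure TLData {K A : Type*} [CommRing K] [Ring A] [Algebra K A] (q : K) (n : ℕ) (e : ℕ → A) :
    Prop where
  hn : 2 ≤ n
  sq : ∀ i ≤ n, e i * e i = (q + 1) • e i
  br : ∀ i ≤ n, e i * e (sc n i) * e i = q • e i
  br' : ∀ i ≤ n, e i * e (pr n i) * e i = q • e i
  cm : ∀ i j, i ≤ n → j ≤ n → j ≠ i → j ≠ sc n i → j ≠ pr n i → Commute (e i) (e j)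

section
variable {K A : Type*} [CommRing K] [Ring A] [Algebra K A] {q : K} {n : ℕ} {e : ℕ → A}

theorem W_nil : W e [] = 1 := rfl
theorem W_cons (a : ℕ) (l : List ℕ) : W e (a :: l) = e a * W e l := by simp [W]
theorem W_app (l l' : List ℕ) : W e (l ++ l') = W e l * W e l' := by simp [W]

/-- A word equal to a multiple of a shorter word. -/
def Red (K : Type*) {A : Type*} [CommRing K] [Ring A] [Algebra K A] (n : ℕ) (e : ℕ → A)
    (l : List ℕ) : Prop :=
  ∃ (c : K) (l' : List ℕ), l'.length < l.length ∧ (∀ a ∈ l', a ≤ n) ∧ W e l = c • W e l'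

theorem Red.ctx {l : List ℕ} (h : Red K n e l) (a b : List ℕ) (ha : ∀ x ∈ a, x ≤ n)
    (hb : ∀ x ∈ b, x ≤ n) : Red K n e (a ++ l ++ b) := by
  obtain ⟨c, l', h1, h2, h3⟩ := h
  refine ⟨c, a ++ l' ++ b, by simp; omega, ?_, ?_⟩
  · intro x hx
    simp only [List.mem_append] at hx
    rcases hx with (hx | hx) | hx
    · exact ha x hx
    · exact h2 x hx
    · exact hb x hx
  · simp [W_app, h3]

theorem commute_W (a : A) (l : List ℕ) (h : ∀ x ∈ l, Commute a (e x)) : Commute a (W e l) := by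
  induction l with
  | nil => exact Commute.one_right a
  | cons b t ih =>
    rw [W_cons]
    exact (h b (by simp)).mul_right (ih fun x hx => h x (by simp [hx]))

theorem commute_WW (l l' : List ℕ) (h : ∀ x ∈ l, ∀ y ∈ l', Commute (e x) (e y)) :
    Commute (W e l) (W e l') :=
  commute_W _ _ fun y hy => (commute_W _ _ fun x hx => (h x hx y hy).symm).symm

theorem split_mem {a : ℕ} {l : List ℕ} (h : a ∈ l) : ∃ s t, l = s ++ a :: t ∧ a ∉ s :=
  List.eq_append_cons_of_mem h

theorem split_two {a : ℕ} {l : List ℕ} (h : [a, a] <+ l) :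
    ∃ s t r, l = s ++ a :: (t ++ a :: r) ∧ a ∉ t := by
  obtain ⟨s, t, rfl, hs⟩ := split_mem (h.subset (by simp : a ∈ [a, a]))
  have h2 : [a, a] <+ a :: t := by
    induction s with
    | nil => exact h
    | cons b s ih =>
      simp only [List.mem_cons, not_or] at hs
      refine ih hs.2 ?_
      cases h with
      | cons _ h => exact h
      | cons_cons _ h => exact absurd rfl hs.1
  have h3 : a ∈ t := by simpa using h2
  obtain ⟨s', t', rfl, hs'⟩ := split_mem h3
  exact ⟨s, s', t', rfl, hs'⟩

/-- Gap lemma, in an abstract direction `f` with opposite direction `g`. -/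
theorem gap_aux (f g : ℕ → ℕ) (hsq : ∀ i ≤ n, e i * e i = (q + 1) • e i)
    (hf : ∀ i ≤ n, f i ≤ n) (hgf : ∀ i ≤ n, g (f i) = i)
    (hbr : ∀ i ≤ n, e i * e (f i) * e i = q • e i)
    (hcm : ∀ i j, i ≤ n → j ≤ n → j ≠ i → j ≠ f i → j ≠ g i → Commute (e i) (e j)) :
    ∀ (m : ℕ) (i : ℕ) (T : List ℕ), T.length ≤ m → i ≤ n → (∀ a ∈ T, a ≤ n) → [i, i] <+ T →
      g i ∉ T → Red K n e T := by
  intro m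
  induction m with
  | zero =>
    intro i T hm _ _ h2 _
    have := h2.length_le
    simp at this; omega
  | succ m ih =>
    intro i T hm hi hT h2 hg
    obtain ⟨s, t, r, rfl, ht⟩ := split_two h2
    have hs : ∀ a ∈ s, a ≤ n := fun a ha => hT a (by simp [ha])
    have hr : ∀ a ∈ r, a ≤ n := fun a ha => hT a (by simp [ha])
    have htn : ∀ a ∈ t, a ≤ n := fun a ha => hT a (by simp [ha])
    have hgt : g i ∉ t := fun h => hg (by simp [h])
    have key : Red K n e (i :: (t ++ [i])) := by
      by_cases hft : f i ∈ t
      · obtain ⟨t1, t2, rfl, ht1⟩ := split_mem hft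
        by_cases hft2 : f i ∈ t2
        · have h4 : [f i, f i] <+ t1 ++ f i :: t2 := by
            refine List.Sublist.trans ?_ (List.sublist_append_right _ _)
            simpa using hft2
          have := ih (f i) _ (by simp at hm ⊢; omega) (hf i hi) htn h4 (by rw [hgf i hi]; exact ht)
          have := this.ctx [i] [i] (by simpa using hi) (by simpa using hi)
          simpa using this
        · have c1 : Commute (e i) (W e t1) := commute_W _ _ fun x hx =>
            hcm i x hi (htn x (by simp [hx])) (by rintro rfl; exact ht (by simp [hx]))
              (by rintro rfl; exact ht1 hx) (by rintro rfl; exact hgt (by simp [hx]))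
          have c2 : Commute (e i) (W e t2) := commute_W _ _ fun x hx =>
            hcm i x hi (htn x (by simp [hx])) (by rintro rfl; exact ht (by simp [hx]))
              (by rintro rfl; exact hft2 hx) (by rintro rfl; exact hgt (by simp [hx]))
          refine ⟨q, t1 ++ i :: t2, by simp, ?_, ?_⟩
          · intro a ha
            simp only [List.mem_append, List.mem_cons] at ha
            rcases ha with ha | rfl | ha
            · exact htn a (by simp [ha])
            · exact hi
            · exact htn a (by simp [ha])
          · simp only [W_cons, W_app, W_nil, mul_one]
            calc e i * (W e t1 * (e (f i) * W e t2) * e i)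
                = (e i * W e t1) * e (f i) * (W e t2 * e i) := by noncomm_ring
              _ = W e t1 * (e i * e (f i) * e i) * W e t2 := by
                rw [c1.eq, ← c2.eq]; noncomm_ring
              _ = _ := by rw [hbr i hi]; simp [mul_assoc]
      · have c1 : Commute (e i) (W e t) := commute_W _ _ fun x hx =>
          hcm i x hi (htn x hx) (by rintro rfl; exact ht hx)
            (by rintro rfl; exact hft hx) (by rintro rfl; exact hgt hx)
        refine ⟨q + 1, i :: t, by simp, ?_, ?_⟩
        · intro a ha
          rcases List.mem_cons.1 ha with rfl | ha
          · exact hi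
          · exact htn a ha
        · simp only [W_cons, W_app, W_nil, mul_one]
          rw [← c1.eq, ← mul_assoc, hsq i hi]; simp
    have := key.ctx s r hs hr
    simpa using this

theorem TLData.gapS (H : TLData q n e) {i : ℕ} {T : List ℕ} (hi : i ≤ n) (hT : ∀ a ∈ T, a ≤ n)
    (h2 : [i, i] <+ T) (hg : sc n i ∉ T) : Red K n e T := by
  have := H.hn
  refine gap_aux (q := q) (pr n) (sc n) H.sq ?_ ?_ H.br' ?_ _ i T le_rfl hi hT h2 hg
  · intro i hi; unfold pr; split_ifs <;> omega
  · intro i hi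
    rcases Nat.eq_zero_or_pos i with rfl | h0
    · simp [pr, sc]
    · have h1 : pr n i = i - 1 := by simp [pr]; omega
      rw [h1, sc, if_neg (by omega)]; omega
  · intro i j h1 h2 h3 h4 h5; exact H.cm i j h1 h2 h3 h5 h4

theorem TLData.gapP (H : TLData q n e) {i : ℕ} {T : List ℕ} (hi : i ≤ n) (hT : ∀ a ∈ T, a ≤ n)
    (h2 : [i, i] <+ T) (hg : pr n i ∉ T) : Red K n e T := by
  have := H.hn
  refine gap_aux (q := q) (sc n) (pr n) H.sq ?_ ?_ H.br ?_ _ i T le_rfl hi hT h2 hg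
  · intro i hi; unfold sc; split_ifs <;> omega
  · intro i hi
    rcases Nat.lt_or_ge i n with h0 | h0
    · have h1 : sc n i = i + 1 := by rw [sc, if_neg (by omega)]
      simp [h1, pr]
    · obtain rfl : i = n := by omega
      simp [pr, sc]
  · intro i j h1 h2 h3 h4 h5; exact H.cm i j h1 h2 h3 h4 h5

/-- Letters at linear distance at least two, not `{0, n}`, commute. -/
theorem TLData.comm_lt (H : TLData q n e) {i j : ℕ} (hij : i + 2 ≤ j) (hj : j ≤ n)
    (h : 0 < i ∨ j < n) : Commute (e i) (e j) := by
  apply H.cm i j (by omega) hj (by omega)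
  · unfold sc; split_ifs <;> omega
  · unfold pr; split_ifs <;> omega

theorem range'_succ_eq (r : ℕ) : List.range' 1 (r + 1) = List.range' 1 r ++ [r + 1] := by
  rw [List.range'_concat]; simp [add_comm]

/-- Lemma V. -/
theorem TLData.vlem (H : TLData q n e) : ∀ (r : ℕ) (T : List ℕ), 1 ≤ r → r < n →
    (∀ a ∈ T, a ≤ n) → 0 ∉ T → (List.range' 1 r ++ [r]) <+ T → Red K n e T := by
  intro r
  induction r with
  | zero => intro T h; omega
  | succ r ih =>
    intro T _ hr hT h0 hs
    rw [range'_succ_eq, List.append_assoc] at hs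
    obtain ⟨a, b, rfl, ha, hb⟩ := List.append_sublist_iff.1 hs
    have hb' : [r + 1, r + 1] <+ b := by simpa using hb
    have hpr : pr n (r + 1) = r := by simp [pr]
    by_cases hrb : r ∈ b
    · rcases Nat.eq_zero_or_pos r with rfl | hr0
      · exact absurd (by simp [hrb]) h0
      · exact ih _ hr0 (by omega) hT h0 (ha.append (by simpa using hrb))
    · have := H.gapP (by omega) (fun x hx => hT x (by simp [hx])) hb' (by rwa [hpr])
      simpa using this.ctx a [] (fun x hx => hT x (by simp [hx])) (by simp)

/-- Lemma S: extracting the part of `u` linked to the final letter. -/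
theorem TLData.slem (H : TLData q n e) (i : ℕ) (hi : i < n) (u : List ℕ)
    (hu : ∀ a ∈ u, a ≤ i) :
    ∃ (l : ℕ) (u1 u2 : List ℕ), l ≤ i ∧ W e (u ++ [i]) = W e (u1 ++ i :: u2) ∧
      (u1 ++ i :: u2).length = (u ++ [i]).length ∧ u1 <+ u ∧ u2 <+ u ∧ (∀ a ∈ u1, l ≤ a) ∧
      (List.range' l (i - l)) <+ u1 := by
  induction u with
  | nil => exact ⟨i, [], [], le_rfl, rfl, rfl, by simp, by simp, by simp, by simp⟩
  | cons c u ih =>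
    obtain ⟨l, u1, u2, hl, h1, h2, h3, h4, h5, h6⟩ := ih fun a ha => hu a (by simp [ha])
    have hc := hu c (by simp)
    by_cases hcl : l ≤ c + 1
    · by_cases hcl' : l ≤ c
      · refine ⟨l, c :: u1, u2, hl, ?_, by simpa using h2, h3.cons_cons _, h4.cons _, ?_,
          h6.cons _⟩
        · simp only [List.cons_append, W_cons, h1]
        · intro a ha
          rcases List.mem_cons.1 ha with rfl | ha
          · exact hcl'
          · exact h5 a ha
      · obtain rfl : l = c + 1 := by omega
        refine ⟨c, c :: u1, u2, hc, ?_, by simpa using h2, h3.cons_cons _, h4.cons _, ?_, ?_⟩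
        · simp only [List.cons_append, W_cons, h1]
        · intro a ha
          rcases List.mem_cons.1 ha with rfl | ha
          · exact le_rfl
          · have := h5 a ha; omega
        · have : i - c = (i - (c + 1)) + 1 := by omega
          rw [this, List.range'_succ]
          exact h6.cons_cons _
    · have cc : Commute (e c) (W e u1) := commute_W _ _ fun x hx =>
        H.comm_lt (by have := h5 x hx; omega)
          (by have := hu x (by simp [h3.subset hx]); omega)
          (Or.inr (by have := hu x (by simp [h3.subset hx]); omega))
      have ci : Commute (e c) (e i) := H.comm_lt (by omega) (by omega) (Or.inr (by omega))
      refine ⟨l, u1, c :: u2, hl, ?_, ?_, h3.cons _, h4.cons_cons _, h5, h6⟩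
      · simp only [List.cons_append, W_cons, h1, W_app]
        rw [← mul_assoc, cc.eq, mul_assoc, ← mul_assoc (e c), ci.eq, mul_assoc]
      · simp at h2 ⊢; omega

end

/-- Regrouping `u₁ c v₁ u₂ c v₂ …` cyclically as `c x₁ c x₂ …`. -/
theorem regroup_aux (ps : List (List ℕ × List ℕ)) :
    ∃ (pre : List ℕ) (xs : List (List ℕ)), xs.length = ps.length ∧
      (∀ a ∈ pre, ∃ p ∈ ps, a ∈ p.1) ∧
      (∀ x ∈ xs, ∃ p ∈ ps, ∃ w, x = p.2 ++ w ∧ ∀ a ∈ w, ∃ p' ∈ ps, a ∈ p'.1) ∧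
      ∀ c : List ℕ, ps.flatMap (fun p => p.1 ++ c ++ p.2) = pre ++ xs.flatMap (fun x => c ++ x) := by
  induction ps with
  | nil => exact ⟨[], [], rfl, by simp, by simp, by simp⟩
  | cons p ps ih =>
    obtain ⟨pre, xs, h1, h2, h3, h4⟩ := ih
    refine ⟨p.1, (p.2 ++ pre) :: xs, by simp [h1], fun a ha => ⟨p, by simp, ha⟩, ?_, ?_⟩
    · intro x hx
      rcases List.mem_cons.1 hx with rfl | hx
      · refine ⟨p, by simp, pre, rfl, fun a ha => ?_⟩
        obtain ⟨p', hp', h⟩ := h2 a ha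
        exact ⟨p', by simp [hp'], h⟩
      · obtain ⟨p', hp', w, h, hw⟩ := h3 x hx
        refine ⟨p', by simp [hp'], w, h, fun a ha => ?_⟩
        obtain ⟨p'', hp'', h⟩ := hw a ha
        exact ⟨p'', by simp [hp''], h⟩
    · intro c
      rw [List.flatMap_cons, h4 c]
      simp

theorem regroup (ps : List (List ℕ × List ℕ)) (hps : ps ≠ []) :
    ∃ (xs : List (List ℕ)), xs.length = ps.length ∧
      (∀ x ∈ xs, ∃ p ∈ ps, ∃ w, x = p.2 ++ w ∧ ∀ a ∈ w, ∃ p' ∈ ps, a ∈ p'.1) ∧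
      ∀ c : List ℕ, (ps.flatMap (fun p => p.1 ++ c ++ p.2)) ~r (xs.flatMap (fun x => c ++ x)) := by
  obtain ⟨pre, xs, h1, h2, h3, h4⟩ := regroup_aux ps
  rcases List.eq_nil_or_concat' xs with rfl | ⟨ys, y, rfl⟩
  · exact absurd (List.length_eq_zero_iff.1 (by simpa using h1.symm)) hps
  · refine ⟨ys ++ [y ++ pre], by simpa using h1, ?_, ?_⟩
    · intro x hx
      simp only [List.mem_append, List.mem_singleton] at hx
      rcases hx with hx | rfl
      · exact h3 x (by simp [hx])
      · obtain ⟨p, hp, w, h, hw⟩ := h3 y (by simp)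
        refine ⟨p, hp, w ++ pre, by simp [h], fun a ha => ?_⟩
        rcases List.mem_append.1 ha with ha | ha
        · exact hw a ha
        · exact h2 a ha
    · intro c
      rw [h4 c]
      have : (ys ++ [y ++ pre]).flatMap (fun x => c ++ x)
          = (ys ++ [y]).flatMap (fun x => c ++ x) ++ pre := by simp
      rw [this]
      exact List.isRotated_append

theorem block_aux (n : ℕ) (l : List ℕ) : ∃ (pre : List ℕ) (xs : List (List ℕ)),
    l = pre ++ xs.flatMap (fun x => [n] ++ x) ∧ n ∉ pre ∧ ∀ x ∈ xs, n ∉ x := by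
  induction l with
  | nil => exact ⟨[], [], rfl, by simp, by simp⟩
  | cons a l ih =>
    obtain ⟨pre, xs, h1, h2, h3⟩ := ih
    by_cases ha : a = n
    · subst ha
      refine ⟨[], pre :: xs, by simp [h1], by simp, ?_⟩
      intro x hx
      rcases List.mem_cons.1 hx with rfl | hx
      · exact h2
      · exact h3 x hx
    · exact ⟨a :: pre, xs, by simp [h1], by simp [h2, Ne.symm ha], h3⟩

theorem block (n : ℕ) (l : List ℕ) (hl : n ∈ l) : ∃ (xs : List (List ℕ)), xs ≠ [] ∧
    l ~r (xs.flatMap (fun x => [n] ++ x)) ∧ ∀ x ∈ xs, n ∉ x := by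
  obtain ⟨pre, xs, h1, h2, h3⟩ := block_aux n l
  rcases List.eq_nil_or_concat' xs with rfl | ⟨ys, y, rfl⟩
  · simp at h1; subst h1; exact absurd hl h2
  · refine ⟨ys ++ [y ++ pre], by simp, ?_, ?_⟩
    · have : (ys ++ [y ++ pre]).flatMap (fun x => [n] ++ x)
          = (ys ++ [y]).flatMap (fun x => [n] ++ x) ++ pre := by simp
      rw [this, h1]
      exact List.isRotated_append
    · intro x hx
      simp only [List.mem_append, List.mem_singleton] at hx
      rcases hx with hx | rfl
      · exact h3 x (by simp [hx])
      · simp [h2, h3 y (by simp)]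

theorem adj_PQ {α : Type*} (P Q : α → Prop) : ∀ (t : List α) (a : α), P a →
    (∀ x ∈ a :: t, P x ∨ Q x) → (∀ x ∈ a :: t, P x) ∨
      ∃ s b c r, a :: t = s ++ b :: c :: r ∧ P b ∧ Q c := by
  intro t
  induction t with
  | nil => intro a ha _; left; simpa using ha
  | cons d t ih =>
    intro a ha h
    rcases h d (by simp) with hd | hd
    · rcases ih d hd (fun x hx => h x (List.mem_cons_of_mem _ hx)) with h1 | ⟨s, b, c, r, h1, h2, h3⟩
      · left
        intro x hx
        rcases List.mem_cons.1 hx with rfl | hx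
        · exact ha
        · exact h1 x hx
      · right
        exact ⟨a :: s, b, c, r, by simp [h1], h2, h3⟩
    · right; exact ⟨[], a, d, t, rfl, ha, hd⟩

end TLWords

namespace TLWords

open scoped List

/-- Words in the letters `1..n-1`. -/
def Mid (n : ℕ) (y : List ℕ) : Prop := ∀ a ∈ y, 1 ≤ a ∧ a < n

/-- The descending chain `n, n-1, …, i+1`. -/
def chain (n i : ℕ) : List ℕ := (List.range' (i + 1) (n - i)).reverse

theorem mem_chain {n i a : ℕ} : a ∈ chain n i ↔ i + 1 ≤ a ∧ a ≤ n := by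
  simp [chain]; omega

theorem chain_snoc {n i : ℕ} (h1 : 1 ≤ i) (hi : i ≤ n) : chain n i ++ [i] = chain n (i - 1) := by
  unfold chain
  have h2 : n - (i - 1) = (n - i) + 1 := by omega
  have h3 : i - 1 + 1 = i := by omega
  rw [h2, h3, List.range'_succ]; simp

theorem chain_zero (n : ℕ) : chain n 0 ++ [0] = (List.range (n + 1)).reverse := by
  unfold chain
  rw [List.range_eq_range', List.range'_succ]; simp

theorem chain_cons {n i : ℕ} (hi : i < n) :
    chain n i = n :: (List.range' (i + 1) (n - i - 1)).reverse := by
  unfold chain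
  have : n - i = (n - i - 1) + 1 := by omega
  rw [this, List.range'_concat]
  simp; omega

theorem chain_snoc' {n i : ℕ} (hi : i < n) :
    chain n i = (List.range' (i + 2) (n - i - 1)).reverse ++ [i + 1] := by
  unfold chain
  have : n - i = (n - i - 1) + 1 := by omega
  rw [this, List.range'_succ]
  simp

theorem chain_last {n : ℕ} (h : 1 ≤ n) : chain n (n - 1) = [n] := by
  rw [chain_cons (by omega)]
  have : n - (n - 1) - 1 = 0 := by omega
  simp [this]

section
variable {K A : Type*} [CommRing K] [Ring A] [Algebra K A]

/-- The element `E` (image of the affine generator). -/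
def Eelt (q' : K) (n : ℕ) (e : ℕ → A) : A := e n + e 0 - e n * e 0 - q' • (e 0 * e n)

/-- Products `E y₁ E y₂ ⋯`. -/
def Eprod (q' : K) (n : ℕ) (e : ℕ → A) (ys : List (List ℕ)) : A :=
  (ys.map fun y => Eelt q' n e * W e y).prod

/-- Hypotheses on the trace `D`. -/
structure DData (q q' : K) (n : ℕ) (e : ℕ → A) (D : A →ₗ[K] K) : Prop where
  tl : TLData q n e
  tr : ∀ x y, D (x * y) = D (y * x)
  qq : q * q' = 1
  h1 : ∀ y, Mid n y → D (W e y) = 0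
  hn : ∀ y, Mid n y → D (W e (n :: y)) = 0
  h0 : ∀ y, Mid n y → D (W e (0 :: y)) = 0
  hn0 : ∀ y, Mid n y → D (W e (n :: 0 :: y)) = 0
  h0n : ∀ y, Mid n y → D (W e (0 :: n :: y)) = 0
  hE : ∀ ys : List (List ℕ), (∀ y ∈ ys, Mid n y) → D (Eprod q' n e ys) = 0
  hG : ∀ k : ℕ, 1 ≤ k → D ((((List.range (n + 1)).reverse.map fun i => e i - 1).prod) ^ k) = 0

variable {q q' : K} {n : ℕ} {e : ℕ → A} {D : A →ₗ[K] K}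

theorem DData.rot (H : DData q q' n e D) {l l' : List ℕ} (h : l ~r l') :
    D (W e l) = D (W e l') := by
  obtain ⟨k, rfl⟩ := h
  rw [List.rotate_eq_drop_append_take_mod, W_app, H.tr, ← W_app, List.take_append_drop]

/-- All shorter words are killed. -/
def Short (n : ℕ) (e : ℕ → A) (D : A →ₗ[K] K) (L : ℕ) : Prop :=
  ∀ l : List ℕ, (∀ a ∈ l, a ≤ n) → l.length < L → D (W e l) = 0

variable {L : ℕ}

theorem DData.zred (H : DData q q' n e D) (hL : Short n e D L) {l a T b : List ℕ}
    (hl : ∀ x ∈ l, x ≤ n) (hlen : l.length ≤ L) (hr : l ~r (a ++ T ++ b))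
    (hT : (∀ x ∈ T, x ≤ n) → Red K n e T) : D (W e l) = 0 := by
  have hm : ∀ x ∈ a ++ T ++ b, x ≤ n := fun x hx => hl x (hr.mem_iff.2 hx)
  have hT' := hT fun x hx => hm x (by simp [hx])
  obtain ⟨c, l', h1, h2, h3⟩ := hT'.ctx a b (fun x hx => hm x (by simp [hx]))
    (fun x hx => hm x (by simp [hx]))
  rw [H.rot hr, h3, map_smul, hL l' h2 (by rw [hr.perm.length_eq] at hlen; omega), smul_zero]

/-! ### Expansion of products of `E` -/

theorem Eprod_cons (v y : List ℕ) (ys : List (List ℕ)) :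
    W e v * Eprod q' n e (y :: ys) = W e (v ++ n :: y) * Eprod q' n e ys
      + W e (v ++ 0 :: y) * Eprod q' n e ys - W e (v ++ n :: 0 :: y) * Eprod q' n e ys
      - q' • (W e (v ++ 0 :: n :: y) * Eprod q' n e ys) := by
  simp only [Eprod, Eelt, List.map_cons, List.prod_cons, W_app, W_cons]
  simp only [mul_add, add_mul, mul_sub, sub_mul, smul_mul_assoc, mul_smul_comm, mul_assoc]

theorem mid_le {y : List ℕ} (h : Mid n y) : ∀ a ∈ y, a ≤ n := fun a ha => (h a ha).2.le

theorem Eshort (hL : Short n e D L) : ∀ (ys : List (List ℕ)) (v : List ℕ),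
    (∀ a ∈ v, a ≤ n) → (∀ y ∈ ys, Mid n y) →
    v.length + (ys.flatMap fun y => n :: 0 :: y).length < L → D (W e v * Eprod q' n e ys) = 0 := by
  intro ys
  induction ys with
  | nil =>
    intro v hv _ hl
    simpa [Eprod] using hL v hv (by simpa using hl)
  | cons y ys ih =>
    intro v hv hy hl
    have hy1 := mid_le (hy y (by simp))
    have hys : ∀ z ∈ ys, Mid n z := fun z hz => hy z (by simp [hz])
    simp only [List.flatMap_cons, List.length_append, List.length_cons] at hl
    have aux : ∀ s : List ℕ, (∀ a ∈ s, a ≤ n) → s.length ≤ y.length + 2 →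
        D (W e (v ++ s) * Eprod q' n e ys) = 0 := by
      intro s hs hs'
      refine ih (v ++ s) ?_ hys (by simp only [List.length_append]; omega)
      intro a ha
      rcases List.mem_append.1 ha with ha | ha
      · exact hv a ha
      · exact hs a ha
    rw [Eprod_cons, map_sub, map_sub, map_add, map_smul, aux, aux, aux, aux]
    · simp
    all_goals first
      | (intro a ha; simp only [List.mem_cons] at ha
         rcases ha with rfl | rfl | ha <;> first | omega | exact hy1 _ ha)
      | (intro a ha; simp only [List.mem_cons] at ha
         rcases ha with rfl | ha <;> first | omega | exact hy1 _ ha)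
      | simp

theorem Ered (hL : Short n e D L) (ys : List (List ℕ)) (v : List ℕ)
    (hr : Red K n e v) (hy : ∀ y ∈ ys, Mid n y)
    (hl : v.length + (ys.flatMap fun y => n :: 0 :: y).length ≤ L) :
    D (W e v * Eprod q' n e ys) = 0 := by
  obtain ⟨c, l', h1, h2, h3⟩ := hr
  rw [h3, smul_mul_assoc, map_smul, Eshort hL ys l' h2 hy (by omega), smul_zero]

theorem len_flat_eq (ys : List (List ℕ)) :
    (ys.flatMap fun y => 0 :: n :: y).length = (ys.flatMap fun y => n :: 0 :: y).length := by
  simp [List.length_flatMap]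

theorem DData.Ea (H : DData q q' n e D) (hL : Short n e D L) : ∀ (ys : List (List ℕ))
    (v0 y0 : List ℕ), (∀ a ∈ v0, a ≤ n) → Mid n y0 → (∀ y ∈ ys, Mid n y) →
    (v0 ++ 0 :: y0).length + (ys.flatMap fun y => n :: 0 :: y).length ≤ L →
    D (W e (v0 ++ 0 :: y0) * Eprod q' n e ys)
      = (-1) ^ ys.length * D (W e (v0 ++ 0 :: y0 ++ ys.flatMap fun y => n :: 0 :: y)) := by
  have hn2 := H.tl.hn
  intro ys
  induction ys with
  | nil => intro v0 y0 _ _ _ _; simp [Eprod]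
  | cons y ys ih =>
    intro v0 y0 hv hy0 hy hl
    have hym := hy y (by simp)
    have hy1 := mid_le hym
    have hy01 := mid_le hy0
    have hys : ∀ z ∈ ys, Mid n z := fun z hz => hy z (by simp [hz])
    simp only [List.flatMap_cons, List.length_append, List.length_cons] at hl
    have hv' : ∀ a ∈ v0 ++ 0 :: y0, a ≤ n := by
      intro a ha
      simp only [List.mem_append, List.mem_cons] at ha
      rcases ha with ha | rfl | ha
      · exact hv a ha
      · omega
      · exact hy01 a ha
    have s1 : ∀ c ≤ n, D (W e (v0 ++ 0 :: y0 ++ c :: y) * Eprod q' n e ys) = 0 := by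
      intro c hc
      refine Eshort hL ys _ ?_ hys (by simp only [List.length_append, List.length_cons]; omega)
      intro a ha
      rcases List.mem_append.1 ha with ha | ha
      · exact hv' a ha
      · rcases List.mem_cons.1 ha with rfl | ha
        · exact hc
        · exact hy1 a ha
    have s2 : D (W e (v0 ++ 0 :: y0 ++ 0 :: n :: y) * Eprod q' n e ys) = 0 := by
      refine Ered hL ys _ ?_ hys (by simp only [List.length_append, List.length_cons]; omega)
      have r0 : Red K n e (0 :: y0 ++ [0]) := by
        refine H.tl.gapP (i := 0) (by omega) ?_ (by simp) ?_
        · intro a ha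
          simp only [List.cons_append, List.mem_cons, List.mem_append, List.not_mem_nil,
            or_false] at ha
          rcases ha with rfl | ha | rfl
          · omega
          · exact hy01 a ha
          · omega
        · intro h
          simp only [pr, if_true, List.cons_append, List.mem_cons, List.mem_append,
            List.not_mem_nil, or_false] at h
          rcases h with h | h | h
          · omega
          · have := (hy0 _ h).2; omega
          · omega
      have := r0.ctx v0 (n :: y) hv (by
        intro a ha
        rcases List.mem_cons.1 ha with rfl | ha
        · exact le_rfl
        · exact hy1 a ha)
      simpa using this
    have s3 := ih (v0 ++ 0 :: y0 ++ [n]) y (by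
      intro a ha
      rcases List.mem_append.1 ha with ha | ha
      · exact hv' a ha
      · simp at ha; omega) hym hys (by simp only [List.length_append, List.length_cons, List.length_nil]; omega)
    have e3 : v0 ++ 0 :: y0 ++ [n] ++ 0 :: y = v0 ++ 0 :: y0 ++ n :: 0 :: y := by simp
    rw [e3] at s3
    rw [Eprod_cons, map_sub, map_sub, map_add, map_smul, s1 n le_rfl, s1 0 (by omega), s2, s3]
    simp [pow_succ]

theorem DData.Eb (H : DData q q' n e D) (hL : Short n e D L) : ∀ (ys : List (List ℕ))
    (v0 y0 : List ℕ), (∀ a ∈ v0, a ≤ n) → Mid n y0 → (∀ y ∈ ys, Mid n y) →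
    (v0 ++ n :: y0).length + (ys.flatMap fun y => n :: 0 :: y).length ≤ L →
    D (W e (v0 ++ n :: y0) * Eprod q' n e ys)
      = (-q') ^ ys.length * D (W e (v0 ++ n :: y0 ++ ys.flatMap fun y => 0 :: n :: y)) := by
  have hn2 := H.tl.hn
  intro ys
  induction ys with
  | nil => intro v0 y0 _ _ _ _; simp [Eprod]
  | cons y ys ih =>
    intro v0 y0 hv hy0 hy hl
    have hym := hy y (by simp)
    have hy1 := mid_le hym
    have hy01 := mid_le hy0
    have hys : ∀ z ∈ ys, Mid n z := fun z hz => hy z (by simp [hz])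
    simp only [List.flatMap_cons, List.length_append, List.length_cons] at hl
    have hv' : ∀ a ∈ v0 ++ n :: y0, a ≤ n := by
      intro a ha
      simp only [List.mem_append, List.mem_cons] at ha
      rcases ha with ha | rfl | ha
      · exact hv a ha
      · omega
      · exact hy01 a ha
    have s1 : ∀ c ≤ n, D (W e (v0 ++ n :: y0 ++ c :: y) * Eprod q' n e ys) = 0 := by
      intro c hc
      refine Eshort hL ys _ ?_ hys (by simp only [List.length_append, List.length_cons]; omega)
      intro a ha
      rcases List.mem_append.1 ha with ha | ha
      · exact hv' a ha
      · rcases List.mem_cons.1 ha with rfl | ha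
        · exact hc
        · exact hy1 a ha
    have s2 : D (W e (v0 ++ n :: y0 ++ n :: 0 :: y) * Eprod q' n e ys) = 0 := by
      refine Ered hL ys _ ?_ hys (by simp only [List.length_append, List.length_cons]; omega)
      have r0 : Red K n e (n :: y0 ++ [n]) := by
        refine H.tl.gapS (i := n) (by omega) ?_ (by simp) ?_
        · intro a ha
          simp only [List.cons_append, List.mem_cons, List.mem_append, List.not_mem_nil,
            or_false] at ha
          rcases ha with rfl | ha | rfl
          · omega
          · exact hy01 a ha
          · omega
        · intro h
          simp only [sc, if_true, List.cons_append, List.mem_cons, List.mem_append,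
            List.not_mem_nil, or_false] at h
          rcases h with h | h | h
          · omega
          · have := (hy0 _ h).1; omega
          · omega
      have := r0.ctx v0 (0 :: y) hv (by
        intro a ha
        rcases List.mem_cons.1 ha with rfl | ha
        · omega
        · exact hy1 a ha)
      simpa using this
    have s3 := ih (v0 ++ n :: y0 ++ [0]) y (by
      intro a ha
      rcases List.mem_append.1 ha with ha | ha
      · exact hv' a ha
      · simp at ha; omega) hym hys (by simp only [List.length_append, List.length_cons, List.length_nil]; omega)
    have e3 : v0 ++ n :: y0 ++ [0] ++ n :: y = v0 ++ n :: y0 ++ 0 :: n :: y := by simp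
    rw [e3] at s3
    rw [Eprod_cons, map_sub, map_sub, map_add, map_smul, s1 n le_rfl, s1 0 (by omega), s2, s3]
    simp [pow_succ]; ring

/-- The flip. -/
theorem DData.flip (H : DData q q' n e D) (hL : Short n e D L) (ys : List (List ℕ))
    (hne : ys ≠ []) (hy : ∀ y ∈ ys, Mid n y)
    (hl : (ys.flatMap fun y => n :: 0 :: y).length ≤ L)
    (hb : D (W e (ys.flatMap fun y => 0 :: n :: y)) = 0) :
    D (W e (ys.flatMap fun y => n :: 0 :: y)) = 0 := by
  have hn2 := H.tl.hn
  obtain ⟨y, ys, rfl⟩ := List.exists_cons_of_ne_nil hne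
  have hym := hy y (by simp)
  have hy1 := mid_le hym
  have hys : ∀ z ∈ ys, Mid n z := fun z hz => hy z (by simp [hz])
  have h := H.hE (y :: ys) hy
  have h' := Eprod_cons (q' := q') (n := n) (e := e) [] y ys
  simp only [W_nil, one_mul, List.nil_append] at h'
  simp only [List.flatMap_cons, List.length_append, List.length_cons] at hl
  have s1 : ∀ c ≤ n, D (W e (c :: y) * Eprod q' n e ys) = 0 := by
    intro c hc
    refine Eshort hL ys _ ?_ hys (by simp only [List.length_cons]; omega)
    intro a ha
    rcases List.mem_cons.1 ha with rfl | ha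
    · exact hc
    · exact hy1 a ha
  have sa := H.Ea hL ys [n] y (by simp) hym hys
    (by simp only [List.length_append, List.length_cons, List.length_nil]; omega)
  have sb := H.Eb hL ys [0] y (by simp) hym hys
    (by simp only [List.length_append, List.length_cons, List.length_nil]; omega)
  simp only [List.nil_append, List.flatMap_cons, List.cons_append] at sa sb hb ⊢
  rw [h', map_sub, map_sub, map_add, map_smul, s1 n le_rfl, s1 0 (by omega), sa, sb, hb] at h
  have hu : IsUnit ((-1 : K) ^ ys.length) := (isUnit_one.neg).pow _
  have h2 : (-1 : K) ^ ys.length * D (W e (n :: 0 :: (y ++ ys.flatMap fun y => n :: 0 :: y))) = 0 := by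
    simpa using h
  exact (hu.mul_right_eq_zero).1 h2

/-! ### Powers of `G` -/

theorem Gexp (hL : Short n e D L) : ∀ (l v : List ℕ), (∀ a ∈ v, a ≤ n) → (∀ a ∈ l, a ≤ n) →
    (v ++ l).length ≤ L → D (W e v * (l.map fun i => e i - 1).prod) = D (W e (v ++ l)) ∧
      ((v ++ l).length < L → D (W e v * (l.map fun i => e i - 1).prod) = 0) := by
  intro l
  induction l with
  | nil => intro v hv _ hl; simpa using fun h => hL v hv h
  | cons a l ih =>
    intro v hv hl' hl
    simp only [List.length_append, List.length_cons] at hl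
    have hl2 : ∀ x ∈ l, x ≤ n := fun x hx => hl' x (by simp [hx])
    have i1 := ih (v ++ [a]) (by
      intro x hx
      rcases List.mem_append.1 hx with hx | hx
      · exact hv x hx
      · exact hl' x (by simp at hx; simp [hx])) hl2 (by simp; omega)
    have i2 := (ih v hv hl2 (by simp; omega)).2 (by simp; omega)
    have ex : W e v * ((a :: l).map fun i => e i - 1).prod
        = W e (v ++ [a]) * (l.map fun i => e i - 1).prod - W e v * (l.map fun i => e i - 1).prod := by
      simp only [List.map_cons, List.prod_cons, W_app, W_cons, W_nil]; noncomm_ring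
    rw [ex, map_sub, i2, sub_zero]
    refine ⟨by rw [i1.1]; simp, fun h => i1.2 (by simp at h ⊢; omega)⟩

theorem DData.Gpow (H : DData q q' n e D) (hL : Short n e D L) (k : ℕ) (hk : 1 ≤ k)
    (hl : ((List.replicate k (List.range (n + 1)).reverse).flatten).length ≤ L) :
    D (W e (List.replicate k (List.range (n + 1)).reverse).flatten) = 0 := by
  have h := H.hG k hk
  have h2 := (Gexp hL (List.replicate k (List.range (n + 1)).reverse).flatten [] (by simp) (by
    intro a ha
    simp only [List.mem_flatten, List.mem_replicate] at ha
    obtain ⟨l, ⟨_, rfl⟩, ha⟩ := ha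
    simp at ha; omega) (by simpa using hl)).1
  rw [List.nil_append] at h2
  rw [← h2, W_nil, one_mul, ← h]
  congr 1
  rw [List.map_flatten, List.prod_flatten, List.map_map, List.map_replicate, List.prod_replicate]
  rfl

end
end TLWords

namespace TLWords

open scoped List

section
variable {K A : Type*} [CommRing K] [Ring A] [Algebra K A]
variable {q q' : K} {n : ℕ} {e : ℕ → A} {D : A →ₗ[K] K} {L : ℕ}

theorem W_flatMap {α : Type*} (f g : α → List ℕ) (ps : List α)
    (h : ∀ p ∈ ps, W e (f p) = W e (g p)) : W e (ps.flatMap f) = W e (ps.flatMap g) := by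
  induction ps with
  | nil => rfl
  | cons p ps ih =>
    rw [List.flatMap_cons, List.flatMap_cons, W_app, W_app, h p (by simp),
      ih fun p hp => h p (by simp [hp])]

theorem len_flatMap {α : Type*} (f g : α → List ℕ) (ps : List α)
    (h : ∀ p ∈ ps, (f p).length = (g p).length) :
    (ps.flatMap f).length = (ps.flatMap g).length := by
  induction ps with
  | nil => rfl
  | cons p ps ih =>
    rw [List.flatMap_cons, List.flatMap_cons, List.length_append, List.length_append,
      h p (by simp), ih fun p hp => h p (by simp [hp])]

theorem flat_rot {α : Type*} (f : α → List ℕ) {xs ys : List α} (h : xs ~r ys) :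
    (xs.flatMap f) ~r (ys.flatMap f) := by
  obtain ⟨k, rfl⟩ := h
  rw [List.rotate_eq_drop_append_take_mod]
  conv_lhs => rw [← List.take_append_drop (k % xs.length) xs]
  rw [List.flatMap_append, List.flatMap_append]
  exact List.isRotated_append

theorem rot_front {α : Type*} {x : α} {xs : List α} (h : x ∈ xs) : ∃ t, xs ~r (x :: t) := by
  obtain ⟨s, t, rfl⟩ := List.append_of_mem h
  exact ⟨t ++ s, by simpa using (List.isRotated_append (l := s) (l' := x :: t))⟩

theorem flat_le {i : ℕ} (hi : i < n) {xs : List (List ℕ)} (hx : ∀ x ∈ xs, ∀ a ∈ x, a ≤ i) :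
    ∀ a ∈ xs.flatMap (fun x => chain n i ++ x), a ≤ n := by
  intro a ha
  simp only [List.mem_flatMap, List.mem_append, mem_chain] at ha
  obtain ⟨x, hx1, ha | ha⟩ := ha
  · omega
  · have := hx x hx1 a ha; omega

theorem pair_sub {a : ℕ} {s t : List ℕ} (hs : a ∈ s) (ht : a ∈ t) : [a, a] <+ s ++ t := by
  have := (List.singleton_sublist.2 hs).append (List.singleton_sublist.2 ht)
  simpa using this

theorem DData.facts (H : DData q q' n e D) (hL : Short n e D L) {i : ℕ} (hi : i < n)
    {xs : List (List ℕ)} (h2 : 2 ≤ xs.length) (hx : ∀ x ∈ xs, ∀ a ∈ x, a ≤ i)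
    (hlen : (xs.flatMap (fun x => chain n i ++ x)).length ≤ L)
    (hD : D (W e (xs.flatMap (fun x => chain n i ++ x))) ≠ 0) :
    ∀ x ∈ xs, ¬ [0, 0] <+ x ∧ ¬ [i, i] <+ x ∧ 0 ∈ x ∧ i ∈ x := by
  intro x hxm
  have hn2 := H.tl.hn
  have hle := hx x hxm
  obtain ⟨t, ht⟩ := rot_front hxm
  have ht2 := ht.perm.length_eq
  obtain ⟨y, r, rfl⟩ : ∃ y r, t = y :: r := by
    cases t with
    | nil => simp at ht2; omega
    | cons y r => exact ⟨y, r, rfl⟩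
  have hr := flat_rot (fun x => chain n i ++ x) ht
  simp only [List.flatMap_cons] at hr
  have hl := flat_le hi hx
  refine ⟨fun h => hD ?_, fun h => hD ?_, ?_, ?_⟩
  · refine H.zred hL hl hlen (a := chain n i) (T := x)
      (b := chain n i ++ y ++ r.flatMap (fun x => chain n i ++ x)) (by simpa using hr) fun hT => ?_
    refine H.tl.gapP (i := 0) (by omega) hT h ?_
    intro h'; have := hle _ h'; simp [pr] at this; omega
  · refine H.zred hL hl hlen (a := chain n i) (T := x)
      (b := chain n i ++ y ++ r.flatMap (fun x => chain n i ++ x)) (by simpa using hr) fun hT => ?_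
    refine H.tl.gapS (i := i) (by omega) hT h ?_
    intro h'; have := hle _ h'; rw [sc, if_neg (by omega)] at this; omega
  · by_contra h
    apply hD
    refine H.zred hL hl hlen (a := []) (T := chain n i ++ x ++ [n])
      (b := (List.range' (i + 1) (n - i - 1)).reverse ++ y ++
        r.flatMap (fun x => chain n i ++ x)) ?_ fun hT => ?_
    · have e1 : chain n i ++ y = [n] ++ ((List.range' (i + 1) (n - i - 1)).reverse ++ y) := by
        rw [chain_cons hi]; simp
      rw [e1] at hr
      simpa using hr
    · refine H.tl.gapS (i := n) le_rfl hT (pair_sub ?_ (by simp)) ?_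
      · simp only [List.mem_append, mem_chain]; left; omega
      · simp only [sc, if_true, List.mem_append, mem_chain, List.mem_singleton]
        intro h'
        rcases h' with (h' | h') | h'
        · omega
        · exact h h'
        · omega
  · by_contra h
    apply hD
    refine H.zred hL hl hlen (a := (List.range' (i + 2) (n - i - 1)).reverse)
      (T := [i + 1] ++ (x ++ chain n i)) (b := y ++ r.flatMap (fun x => chain n i ++ x)) ?_
      fun hT => ?_
    · have e1 : chain n i ++ x = (List.range' (i + 2) (n - i - 1)).reverse ++ ([i + 1] ++ x) := by
        rw [chain_snoc' hi]; simp
      rw [e1] at hr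
      simpa using hr
    · refine H.tl.gapP (i := i + 1) (by omega) hT (pair_sub (by simp) ?_) ?_
      · simp only [List.mem_append, mem_chain]; right; omega
      · simp only [pr, List.mem_append, mem_chain, List.mem_singleton]
        rw [if_neg (by omega)]
        intro h'
        rcases h' with h' | h' | h'
        · omega
        · exact h (by simpa using h')
        · omega

/-- Statement of the stage `i` of the induction. -/
def Stage (n : ℕ) (e : ℕ → A) (D : A →ₗ[K] K) (L i : ℕ) : Prop :=
  ∀ xs : List (List ℕ), 2 ≤ xs.length → (∀ x ∈ xs, ∀ a ∈ x, a ≤ i) →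
    (xs.flatMap (fun x => chain n i ++ x)).length ≤ L →
    D (W e (xs.flatMap (fun x => chain n i ++ x))) = 0

theorem DData.lemU (H : DData q q' n e D) (hL : Short n e D L) {i : ℕ} (h1 : 1 ≤ i) (hi : i < n)
    (hS : Stage n e D L (i - 1)) (ps : List (List ℕ × List ℕ)) (h2 : 2 ≤ ps.length)
    (hp : ∀ p ∈ ps, (∀ a ∈ p.1, 1 ≤ a ∧ a < i) ∧ ∀ a ∈ p.2, a ≤ i)
    (hlen : (ps.flatMap (fun p => chain n i ++ (p.1 ++ i :: p.2))).length ≤ L) :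
    D (W e (ps.flatMap (fun p => chain n i ++ (p.1 ++ i :: p.2)))) = 0 := by
  by_contra hD
  have ex : ps.flatMap (fun p => chain n i ++ (p.1 ++ i :: p.2))
      = (ps.map fun p => p.1 ++ i :: p.2).flatMap (fun x => chain n i ++ x) := by
    rw [List.flatMap_map]
  have hf := H.facts hL hi (xs := ps.map fun p => p.1 ++ i :: p.2) (by simpa using h2) (by
    intro x hx a ha
    obtain ⟨p, hp', rfl⟩ := List.mem_map.1 hx
    simp only [List.mem_append, List.mem_cons] at ha
    rcases ha with ha | rfl | ha
    · exact ((hp p hp').1 a ha).2.le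
    · exact le_rfl
    · exact (hp p hp').2 a ha) (by rw [← ex]; exact hlen) (by rw [← ex]; exact hD)
  have hv : ∀ p ∈ ps, i ∉ p.2 := by
    intro p hp' hiv
    refine (hf _ (List.mem_map.2 ⟨p, hp', rfl⟩)).2.1 ?_
    have : [i, i] <+ i :: p.2 := by simpa using hiv
    exact this.trans (List.sublist_append_right _ _)
  have hW : W e (ps.flatMap (fun p => chain n i ++ (p.1 ++ i :: p.2)))
      = W e (ps.flatMap (fun p => p.1 ++ chain n (i - 1) ++ p.2)) := by
    apply W_flatMap
    intro p hp'
    have hc : Commute (W e p.1) (W e (chain n i)) := by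
      refine commute_WW _ _ fun x hx y hy => ?_
      have := (hp p hp').1 x hx
      rw [mem_chain] at hy
      exact H.tl.comm_lt (by omega) hy.2 (by omega)
    rw [← chain_snoc h1 hi.le]
    have : p.1 ++ (chain n i ++ [i]) ++ p.2 = p.1 ++ (chain n i ++ (i :: p.2)) := by simp
    rw [this, W_app, W_app, W_app, W_app, ← mul_assoc, ← mul_assoc, hc.eq]
  have hlen' : (ps.flatMap (fun p => chain n i ++ (p.1 ++ i :: p.2))).length
      = (ps.flatMap (fun p => p.1 ++ chain n (i - 1) ++ p.2)).length := by
    apply len_flatMap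
    intro p _
    rw [← chain_snoc h1 hi.le]
    simp; omega
  obtain ⟨xs, x1, x2, x3⟩ := regroup ps (by rintro rfl; simp at h2)
  have x4 := x3 (chain n (i - 1))
  apply hD
  rw [hW, H.rot x4]
  apply hS xs (by omega)
  · intro x hx a ha
    obtain ⟨p, hp', w, rfl, hw⟩ := x2 x hx
    rcases List.mem_append.1 ha with ha | ha
    · have := (hp p hp').2 a ha
      have : a ≠ i := fun h => hv p hp' (h ▸ ha)
      omega
    · obtain ⟨p', hp', ha⟩ := hw a ha
      have := ((hp p' hp').1 a ha).2
      omega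
  · rw [← x4.perm.length_eq, ← hlen']; exact hlen

/-- Unlinked blocks. -/
def QQ (e : ℕ → A) (i : ℕ) (x : List ℕ) : Prop := ∃ u v : List ℕ, (∀ a ∈ u, 1 ≤ a ∧ a < i) ∧
  (∀ a ∈ v, a ≤ i) ∧ W e x = W e (u ++ i :: v) ∧ x.length = (u ++ i :: v).length

/-- Linked blocks. -/
def PP (i : ℕ) (x : List ℕ) : Prop := ∃ u v : List ℕ, x = u ++ 0 :: v ∧ 0 ∉ u ∧ 0 ∉ v ∧
  List.range' 1 i <+ v

theorem DData.allQ (H : DData q q' n e D) (hL : Short n e D L) {i : ℕ} (h1 : 1 ≤ i) (hi : i < n)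
    (hS : Stage n e D L (i - 1)) (xs : List (List ℕ)) (h2 : 2 ≤ xs.length)
    (hQ : ∀ x ∈ xs, QQ e i x)
    (hlen : (xs.flatMap (fun x => chain n i ++ x)).length ≤ L) :
    D (W e (xs.flatMap (fun x => chain n i ++ x))) = 0 := by
  choose! u v hu hv hw hl using hQ
  have hU := H.lemU hL h1 hi hS (xs.map fun x => (u x, v x)) (by simpa using h2) (by
    intro p hp
    obtain ⟨x, hx, rfl⟩ := List.mem_map.1 hp
    exact ⟨hu x hx, hv x hx⟩)
  rw [List.flatMap_map] at hU
  rw [W_flatMap _ (fun x => chain n i ++ (u x ++ i :: v x))]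
  · apply hU
    rw [← len_flatMap (fun x => chain n i ++ x)]
    · exact hlen
    · intro x hx; simp only [List.length_append (as := chain n i), hl x hx]
  · intro x hx; rw [W_app, W_app (chain n i), hw x hx]

theorem sub_tail {a : ℕ} {l s t : List ℕ} (hs : a ∉ s) (h : a :: l <+ s ++ a :: t) : l <+ t := by
  induction s with
  | nil => simpa using h
  | cons b s ih =>
    simp only [List.mem_cons, not_or] at hs
    refine ih hs.2 ?_
    cases h with
    | cons _ h => exact h
    | cons_cons _ h => exact absurd rfl hs.1

theorem DData.PQ (H : DData q q' n e D) {i : ℕ} (hi : i < n) (x : List ℕ)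
    (hx : ∀ a ∈ x, a ≤ i) (f0 : ¬ [0, 0] <+ x) (h0 : 0 ∈ x) (hix : i ∈ x) : PP i x ∨ QQ e i x := by
  obtain ⟨u, v, rfl, hiu⟩ := split_mem hix
  obtain ⟨l, u1, u2, hl, h1, h2, h3, h4, h5, h6⟩ := H.tl.slem i hi u fun a ha => hx a (by simp [ha])
  by_cases hu : 0 ∈ u1
  · left
    have hl0 : l = 0 := by have := h5 0 hu; omega
    subst hl0
    obtain ⟨b1, b2, hb, hb1⟩ := split_mem h0
    refine ⟨b1, b2, hb, hb1, ?_, ?_⟩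
    · intro h
      apply f0
      rw [hb]
      have : [0, 0] <+ 0 :: b2 := by simpa using h
      exact this.trans (List.sublist_append_right _ _)
    · have hs : List.range' 0 i ++ [i] <+ u ++ i :: v :=
        (h6.trans h3).append (by simp)
      rw [hb] at hs
      have e1 : List.range' 0 i ++ [i] = 0 :: List.range' 1 i := by
        have := List.range'_concat (s := 0) (n := i) (step := 1)
        rw [List.range'_succ] at this
        simpa using this.symm
      rw [e1] at hs
      exact sub_tail hb1 hs
  · right
    refine ⟨u1, u2 ++ v, ?_, ?_, ?_, ?_⟩
    · intro a ha
      have ha' := h3.subset ha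
      have := hx a (by simp [ha'])
      have h7 : a ≠ i := fun h => hiu (h ▸ ha')
      have h8 : a ≠ 0 := fun h => hu (h ▸ ha)
      omega
    · intro a ha
      rcases List.mem_append.1 ha with ha | ha
      · exact hx a (by simp [h4.subset ha])
      · exact hx a (by simp [ha])
    · have e1 : u ++ i :: v = (u ++ [i]) ++ v := by simp
      have e2 : u1 ++ i :: (u2 ++ v) = (u1 ++ i :: u2) ++ v := by simp
      rw [e1, e2, W_app, W_app _ v, h1]
    · simp at h2 ⊢; omega

theorem DData.adjacent (H : DData q q' n e D) (hL : Short n e D L) {i : ℕ} (h1 : 1 ≤ i)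
    (hi : i < n) (s r : List (List ℕ)) (b c : List ℕ)
    (hx : ∀ x ∈ s ++ b :: c :: r, ∀ a ∈ x, a ≤ i) (hb : PP i b) (hc : QQ e i c)
    (hlen : ((s ++ b :: c :: r).flatMap (fun x => chain n i ++ x)).length ≤ L) :
    D (W e ((s ++ b :: c :: r).flatMap (fun x => chain n i ++ x))) = 0 := by
  obtain ⟨b1, b2, rfl, hb1, hb2, hb3⟩ := hb
  obtain ⟨u, v, hu, hv, hw, hl⟩ := hc
  have ew : W e ((s ++ (b1 ++ 0 :: b2) :: c :: r).flatMap (fun x => chain n i ++ x))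
      = W e ((s ++ (b1 ++ 0 :: b2) :: (u ++ i :: v) :: r).flatMap (fun x => chain n i ++ x)) := by
    simp only [List.flatMap_append, List.flatMap_cons, W_app, hw]
  have el : ((s ++ (b1 ++ 0 :: b2) :: c :: r).flatMap (fun x => chain n i ++ x)).length
      = ((s ++ (b1 ++ 0 :: b2) :: (u ++ i :: v) :: r).flatMap (fun x => chain n i ++ x)).length := by
    simp only [List.flatMap_append, List.flatMap_cons, List.length_append, hl]
  rw [ew]
  rw [el] at hlen
  refine H.zred hL (flat_le hi ?_) hlen
    (a := s.flatMap (fun x => chain n i ++ x) ++ (chain n i ++ b1 ++ [0]))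
    (T := b2 ++ (chain n i ++ u ++ [i])) (b := v ++ r.flatMap (fun x => chain n i ++ x)) ?_ ?_
  · intro x hxm
    simp only [List.mem_append, List.mem_cons] at hxm
    rcases hxm with hxm | rfl | rfl | hxm
    · exact hx x (by simp [hxm])
    · exact hx _ (by simp)
    · intro a ha
      simp only [List.mem_append, List.mem_cons] at ha
      rcases ha with ha | rfl | ha
      · exact (hu a ha).2.le
      · exact le_rfl
      · exact hv a ha
    · exact hx x (by simp [hxm])
  · have : (s ++ (b1 ++ 0 :: b2) :: (u ++ i :: v) :: r).flatMap (fun x => chain n i ++ x)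
        = s.flatMap (fun x => chain n i ++ x) ++ (chain n i ++ b1 ++ [0]) ++
          (b2 ++ (chain n i ++ u ++ [i])) ++ (v ++ r.flatMap (fun x => chain n i ++ x)) := by
      simp
    rw [this]
  · intro hT
    refine H.tl.vlem i _ h1 hi hT ?_ (hb3.append (by simp))
    simp only [List.mem_append, mem_chain, List.mem_singleton]
    rintro (h | (h | h) | h)
    · exact hb2 h
    · omega
    · have := hu 0 h; omega
    · omega

theorem DData.allP (H : DData q q' n e D) (hL : Short n e D L) {i : ℕ} (h1 : 1 ≤ i) (hi : i < n)
    (hS : Stage n e D L (i - 1)) (xs : List (List ℕ)) (h2 : 2 ≤ xs.length)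
    (hx : ∀ x ∈ xs, ∀ a ∈ x, a ≤ i)
    (hP : ∀ x ∈ xs, PP i x) (hii : ∀ x ∈ xs, ¬ [i, i] <+ x)
    (hlen : (xs.flatMap (fun x => chain n i ++ x)).length ≤ L) :
    D (W e (xs.flatMap (fun x => chain n i ++ x))) = 0 := by
  have hn2 := H.tl.hn
  choose! u v hxe hu0 hv0 hr using hP
  have hiv : ∀ x ∈ xs, i ∈ v x := fun x hxm => (hr x hxm).subset (by simp; omega)
  have hu : ∀ x ∈ xs, ∀ a ∈ u x, 1 ≤ a ∧ a < i := by
    intro x hxm a ha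
    have e1 := hxe x hxm
    have h3 : a ≤ i := hx x hxm a (by rw [e1]; simp [ha])
    have h4 : a ≠ 0 := fun h => hu0 x hxm (h ▸ ha)
    have h5 : a ≠ i := by
      rintro rfl
      apply hii x hxm
      rw [e1]
      exact pair_sub ha (by simp [hiv x hxm])
    omega
  have hv : ∀ x ∈ xs, ∀ a ∈ v x, 1 ≤ a ∧ a ≤ i := by
    intro x hxm a ha
    have h3 : a ≤ i := hx x hxm a (by rw [hxe x hxm]; simp [ha])
    have h4 : a ≠ 0 := fun h => hv0 x hxm (h ▸ ha)
    omega
  obtain ⟨ys, y1, y2, y3⟩ := regroup (xs.map fun x => (u x, v x))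
    (by intro h; rw [List.map_eq_nil_iff] at h; subst h; simp at h2)
  have y4 := y3 (chain n i ++ [0])
  rw [List.flatMap_map] at y4
  rw [List.length_map] at y1
  have hyi : ∀ y ∈ ys, i ∈ y ∧ ∀ a ∈ y, 1 ≤ a ∧ a ≤ i := by
    intro y hy
    obtain ⟨p, hp, w, rfl, hw⟩ := y2 y hy
    obtain ⟨x, hxm, rfl⟩ := List.mem_map.1 hp
    refine ⟨by simp [hiv x hxm], fun a ha => ?_⟩
    rcases List.mem_append.1 ha with ha | ha
    · exact hv x hxm a ha
    · obtain ⟨p', hp', ha⟩ := hw a ha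
      obtain ⟨x', hxm', rfl⟩ := List.mem_map.1 hp'
      have := hu x' hxm' a ha
      omega
  have w1 : W e (xs.flatMap (fun x => chain n i ++ x))
      = W e (xs.flatMap (fun x => u x ++ (chain n i ++ [0]) ++ v x)) := by
    apply W_flatMap
    intro x hxm
    have hc : Commute (W e (u x)) (W e (chain n i)) := by
      refine commute_WW _ _ fun a ha b hb => ?_
      have := hu x hxm a ha
      rw [mem_chain] at hb
      exact H.tl.comm_lt (by omega) hb.2 (by omega)
    have e1 : u x ++ (chain n i ++ [0]) ++ v x = u x ++ (chain n i ++ (0 :: v x)) := by simp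
    rw [e1]
    conv_lhs => rw [hxe x hxm]
    rw [W_app, W_app, W_app, W_app, ← mul_assoc, ← mul_assoc, hc.eq]
  have l1 : (xs.flatMap (fun x => chain n i ++ x)).length
      = (xs.flatMap (fun x => u x ++ (chain n i ++ [0]) ++ v x)).length := by
    apply len_flatMap
    intro x hxm
    have := congrArg List.length (hxe x hxm)
    simp at this ⊢
    omega
  rw [w1, H.rot y4]
  rw [l1, y4.perm.length_eq] at hlen
  set mid := (List.range' (i + 1) (n - i - 1)).reverse with hmid
  have hmm : ∀ a ∈ mid, i + 1 ≤ a ∧ a < n := by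
    intro a ha
    simp only [hmid, List.mem_reverse, List.mem_range'_1] at ha
    omega
  have hcm : chain n i = n :: mid := chain_cons hi
  have w2 : W e (ys.flatMap (fun y => chain n i ++ [0] ++ y))
      = W e ((ys.map fun y => mid ++ y).flatMap (fun y => n :: 0 :: y)) := by
    rw [List.flatMap_map]
    apply W_flatMap
    intro y _
    have hc : Commute (e 0) (W e mid) := by
      refine commute_W _ _ fun a ha => ?_
      have := hmm a ha
      exact H.tl.comm_lt (by omega) (by omega) (by omega)
    rw [hcm]
    simp only [List.cons_append, W_cons, W_app, W_nil, mul_one]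
    rw [← hc.eq, mul_assoc (e 0)]
  have l2 : (ys.flatMap (fun y => chain n i ++ [0] ++ y)).length
      = ((ys.map fun y => mid ++ y).flatMap (fun y => n :: 0 :: y)).length := by
    rw [List.flatMap_map]
    apply len_flatMap
    intro y _
    rw [hcm]; simp; omega
  rw [w2]
  rw [l2] at hlen
  refine H.flip hL _ ?_ ?_ hlen ?_
  · intro h; rw [List.map_eq_nil_iff] at h; subst h; simp at y1; omega
  · intro y hy a ha
    obtain ⟨y, hym, rfl⟩ := List.mem_map.1 hy
    rcases List.mem_append.1 ha with ha | ha
    · have := hmm a ha; omega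
    · have := (hyi y hym).2 a ha; omega
  · obtain ⟨zs, z1, z2, z3⟩ := regroup (ys.map fun y => ([0], y))
      (by intro h; rw [List.map_eq_nil_iff] at h; subst h; simp at y1; omega)
    have z4 := z3 (chain n i)
    have ef : (ys.map fun y => mid ++ y).flatMap (fun y => 0 :: n :: y)
        = (ys.map fun y => ([0], y)).flatMap (fun p => p.1 ++ chain n i ++ p.2) := by
      rw [List.flatMap_map, List.flatMap_map, hcm]; simp
    rw [List.length_map] at z1
    rw [← len_flat_eq, ef, z4.perm.length_eq] at hlen
    rw [ef, H.rot z4]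
    apply H.allQ hL h1 hi hS zs (by omega) _ hlen
    intro z hz
    obtain ⟨p, hp, w, rfl, hw⟩ := z2 z hz
    obtain ⟨y, hym, rfl⟩ := List.mem_map.1 hp
    obtain ⟨hy1, hy2⟩ := hyi y hym
    obtain ⟨a, b, rfl, hia⟩ := split_mem hy1
    refine ⟨a, b ++ w, ?_, ?_, by simp, by simp⟩
    · intro c hc
      have := hy2 c (by simp [hc])
      have : c ≠ i := fun h => hia (h ▸ hc)
      omega
    · intro c hc
      rcases List.mem_append.1 hc with hc | hc
      · exact (hy2 c (by simp [hc])).2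
      · obtain ⟨p', hp', hc⟩ := hw c hc
        obtain ⟨y', _, rfl⟩ := List.mem_map.1 hp'
        simp at hc; omega

theorem DData.stage_succ (H : DData q q' n e D) (hL : Short n e D L) {i : ℕ} (h1 : 1 ≤ i)
    (hi : i < n) (hS : Stage n e D L (i - 1)) : Stage n e D L i := by
  intro xs h2 hx hlen
  by_contra hD
  have hf := H.facts hL hi h2 hx hlen hD
  have hPQ : ∀ x ∈ xs, PP i x ∨ QQ e i x := fun x hxm =>
    H.PQ hi x (hx x hxm) (hf x hxm).1 (hf x hxm).2.2.1 (hf x hxm).2.2.2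
  by_cases hQ : ∀ x ∈ xs, QQ e i x
  · exact hD (H.allQ hL h1 hi hS xs h2 hQ hlen)
  · push Not at hQ
    obtain ⟨x, hxm, hxQ⟩ := hQ
    have hxP := (hPQ x hxm).resolve_right hxQ
    obtain ⟨t, ht⟩ := rot_front hxm
    rcases adj_PQ (PP i) (QQ e i) t x hxP (fun y hy => hPQ y (ht.mem_iff.2 hy)) with h | h
    · exact hD (H.allP hL h1 hi hS xs h2 hx (fun y hy => h y (ht.mem_iff.1 hy))
        (fun y hy => (hf y hy).2.1) hlen)
    · obtain ⟨s, b, c, r, he, hb, hc⟩ := h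
      have hr := flat_rot (fun x => chain n i ++ x) ht
      rw [he] at hr ht
      apply hD
      rw [H.rot hr]
      rw [hr.perm.length_eq] at hlen
      exact H.adjacent hL h1 hi s r b c (fun y hy => hx y (ht.mem_iff.2 hy)) hb hc hlen

theorem DData.stage_zero (H : DData q q' n e D) (hL : Short n e D L) : Stage n e D L 0 := by
  intro xs h2 hx hlen
  have hn2 := H.tl.hn
  by_contra hD
  have hf := H.facts hL (by omega) h2 hx hlen hD
  have hx0 : ∀ x ∈ xs, x = [0] := by
    intro x hxm
    obtain ⟨h00, _, h0, _⟩ := hf x hxm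
    have ha := hx x hxm
    match x, h00, h0, ha with
    | [a], _, _, ha => have := ha a (by simp); simp; omega
    | a :: b :: t, h00, _, ha =>
      exfalso
      have h3 := ha a (by simp)
      have h4 := ha b (by simp)
      obtain rfl : a = 0 := by omega
      obtain rfl : b = 0 := by omega
      exact h00 (by simp)
  have hrep := List.eq_replicate_of_mem hx0
  have hfl : xs.flatMap (fun x => chain n 0 ++ x)
      = (List.replicate xs.length (List.range (n + 1)).reverse).flatten := by
    rw [← chain_zero]
    conv_lhs => rw [hrep]
    rw [List.flatMap_def, List.map_replicate]
  rw [hfl] at hlen hD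
  exact hD (H.Gpow hL xs.length (by omega) hlen)

theorem DData.stage (H : DData q q' n e D) (hL : Short n e D L) (i : ℕ) (hi : i < n) :
    Stage n e D L i := by
  induction i with
  | zero => exact H.stage_zero hL
  | succ i ih => exact H.stage_succ hL (by omega) hi (ih (by omega))

theorem two_of_mem {a : ℕ} {s t : List ℕ} (h : a ∈ t) : [a, a] <+ s ++ a :: t := by
  have : [a, a] <+ a :: t := by simpa using h
  exact this.trans (List.sublist_append_right _ _)

theorem DData.word (H : DData q q' n e D) (L : ℕ) (hL : Short n e D L) (l : List ℕ)
    (hl : ∀ a ∈ l, a ≤ n) (hlen : l.length ≤ L) : D (W e l) = 0 := by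
  have hn2 := H.tl.hn
  by_cases hnl : n ∈ l
  · obtain ⟨xs, hne, hr, hxn⟩ := block n l hnl
    have hxl : ∀ x ∈ xs, ∀ a ∈ x, a ≤ n - 1 := by
      intro x hx a ha
      have h1 : a ≤ n := hl a (hr.mem_iff.2 (by
        simp only [List.mem_flatMap]; exact ⟨x, hx, by simp [ha]⟩))
      have : a ≠ n := fun h => hxn x hx (h ▸ ha)
      omega
    rcases Nat.lt_or_ge xs.length 2 with h2 | h2
    · obtain ⟨x, rfl⟩ : ∃ x, xs = [x] := by
        match xs, hne, h2 with
        | [x], _, _ => exact ⟨x, rfl⟩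
      have hr' : l ~r ([n] ++ x) := by simpa using hr
      have hx := hxl x (by simp)
      by_cases h0 : 0 ∈ x
      · obtain ⟨a, b, rfl, h0a⟩ := split_mem h0
        by_cases h0b : 0 ∈ b
        · refine H.zred hL hl hlen (a := [n]) (T := a ++ 0 :: b) (b := []) (by simpa using hr')
            fun hT => ?_
          refine H.tl.gapP (i := 0) (by omega) hT (two_of_mem h0b) ?_
          intro h; have := hx _ h; simp [pr] at this; omega
        · have hab : Mid n (a ++ b) := by
            intro c hc
            have h3 : c ≠ 0 := by
              rintro rfl
              rcases List.mem_append.1 hc with hc | hc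
              · exact h0a hc
              · exact h0b hc
            have h4 := hx c (by simp at hc ⊢; tauto)
            omega
          by_cases h1a : 1 ∈ a
          · by_cases h1b : 1 ∈ b
            · refine H.zred hL hl hlen (a := []) (T := b ++ (n :: a)) (b := [0]) ?_ fun hT => ?_
              · refine hr'.trans ?_
                have e1 : [n] ++ (a ++ 0 :: b) = (n :: a ++ [0]) ++ b := by simp
                have e2 : [] ++ (b ++ (n :: a)) ++ [0] = b ++ (n :: a ++ [0]) := by simp
                rw [e1, e2]
                exact List.isRotated_append
              · refine H.tl.gapP (i := 1) (by omega) hT (pair_sub h1b (by simp [h1a])) ?_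
                simp only [pr, List.mem_append, List.mem_cons]
                simp [h0a, h0b]; omega
            · rw [H.rot hr']
              have hc : Commute (e 0) (W e b) := by
                refine commute_W _ _ fun c hc => ?_
                have h3 := hab c (by simp [hc])
                have h4 : c ≠ 1 := fun h => h1b (h ▸ hc)
                exact H.tl.comm_lt (by omega) (by omega) (by omega)
              have e1 : W e ([n] ++ (a ++ 0 :: b)) = W e ((n :: (a ++ b)) ++ [0]) := by
                simp only [W_app, W_cons, W_nil, List.cons_append, List.nil_append, mul_one,
                  mul_assoc, hc.eq]
              rw [e1, H.rot List.isRotated_append]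
              exact H.h0n _ hab
          · rw [H.rot hr']
            have hc : Commute (e 0) (W e a) := by
              refine commute_W _ _ fun c hc => ?_
              have h3 := hab c (by simp [hc])
              have h4 : c ≠ 1 := fun h => h1a (h ▸ hc)
              exact H.tl.comm_lt (by omega) (by omega) (by omega)
            have e1 : W e ([n] ++ (a ++ 0 :: b)) = W e (n :: 0 :: (a ++ b)) := by
              simp only [W_app, W_cons, List.cons_append, List.nil_append]
              rw [← mul_assoc (W e a), ← hc.eq, mul_assoc]
            rw [e1]
            exact H.hn0 _ hab
      · rw [H.rot hr']
        refine H.hn x fun a ha => ?_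
        have := hx a ha
        have : a ≠ 0 := fun h => h0 (h ▸ ha)
        omega
    · have hs := H.stage hL (n - 1) (by omega) xs h2 hxl
      rw [chain_last (by omega)] at hs
      rw [H.rot hr]
      exact hs (by rw [← hr.perm.length_eq]; exact hlen)
  · by_cases h0 : 0 ∈ l
    · obtain ⟨a, b, rfl, h0a⟩ := split_mem h0
      by_cases h0b : 0 ∈ b
      · refine H.zred hL hl hlen (a := []) (T := a ++ 0 :: b) (b := []) (by simp; rfl) fun hT => ?_
        exact H.tl.gapP (i := 0) (by omega) hT (two_of_mem h0b) (by simpa [pr] using hnl)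
      · rw [H.rot (List.isRotated_append (l := a) (l' := 0 :: b))]
        refine H.h0 (b ++ a) fun c hc => ?_
        have h1 : c ≤ n := hl c (by simp at hc ⊢; tauto)
        have h2 : c ≠ 0 := by
          rintro rfl
          rcases List.mem_append.1 hc with hc | hc
          · exact h0b hc
          · exact h0a hc
        have h3 : c ≠ n := by
          rintro rfl
          exact hnl (by simp at hc ⊢; tauto)
        omega
    · refine H.h1 l fun c hc => ?_
      have := hl c hc
      have h2 : c ≠ 0 := fun h => h0 (h ▸ hc)
      have h3 : c ≠ n := fun h => hnl (h ▸ hc)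
      omega

theorem DData.words (H : DData q q' n e D) (L : ℕ) : Short n e D L := by
  induction L with
  | zero => intro l _ h; omega
  | succ L ih => intro l hl h; exact H.word L ih l hl (by omega)

end
end TLWords

namespace TLWords

open scoped List

section
variable {K A : Type*} [CommRing K] [Ring A] [Algebra K A]
variable {q q' : K} {n : ℕ} {e : ℕ → A} {D : A →ₗ[K] K}

theorem mkDData (tl : TLData q n e) (tr : ∀ x y, D (x * y) = D (y * x)) (qq : q * q' = 1)
    (R : Subalgebra K A) (hj : ∀ j, 1 ≤ j → j < n → e j ∈ R) (hER : Eelt q' n e ∈ R)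
    (hD1 : ∀ x ∈ R, D x = 0) (hDn : ∀ x ∈ R, D (e n * x) = 0)
    (hG : ∀ k : ℕ, 1 ≤ k →
      D ((((List.range (n + 1)).reverse.map fun i => e i - 1).prod) ^ k) = 0) :
    DData q q' n e D := by
  have hW : ∀ y, Mid n y → W e y ∈ R := by
    intro y hy
    refine Subalgebra.list_prod_mem R fun x hx => ?_
    obtain ⟨a, ha, rfl⟩ := List.mem_map.1 hx
    exact hj a (hy a ha).1 (hy a ha).2
  have sqn := tl.sq n le_rfl
  have brn : e n * e 0 * e n = q • e n := by
    have := tl.br n le_rfl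
    simpa [sc] using this
  have hnE : e n * Eelt q' n e = q • e n - q • (e n * e 0) := by
    have h1 : e n * Eelt q' n e = e n * e n + e n * e 0 - (e n * e n) * e 0
        - q' • (e n * e 0 * e n) := by
      simp only [Eelt, mul_sub, mul_add, mul_smul_comm, mul_assoc]
    rw [h1, sqn, brn, smul_smul, mul_comm q' q, qq, smul_mul_assoc]
    module
  have hEn : Eelt q' n e * e n = e n - q' • (e 0 * e n) := by
    have h1 : Eelt q' n e * e n = e n * e n + e 0 * e n - e n * e 0 * e n
        - q' • (e 0 * (e n * e n)) := by
      simp only [Eelt, sub_mul, add_mul, smul_mul_assoc, mul_assoc]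
    have h2 : q' • (q + 1) • (e 0 * e n) = e 0 * e n + q' • (e 0 * e n) := by
      rw [smul_smul, mul_add, mul_one, mul_comm q' q, qq, add_smul, one_smul]
    rw [h1, sqn, brn, mul_smul_comm, h2]
    module
  have key1 : ∀ x ∈ R, D (e n * e 0 * x) = 0 := by
    intro x hx
    have h1 := hDn _ (R.mul_mem hER hx)
    rw [← mul_assoc, hnE, sub_mul, map_sub, smul_mul_assoc, smul_mul_assoc, map_smul, map_smul,
      hDn x hx, smul_zero, zero_sub, neg_eq_zero, smul_eq_mul] at h1
    have h2 := congrArg (fun z => q' * z) h1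
    simpa [← mul_assoc, mul_comm q' q, qq] using h2
  have key2 : ∀ x ∈ R, D (e 0 * e n * x) = 0 := by
    intro x hx
    have h1 := hDn _ (R.mul_mem hx hER)
    rw [← mul_assoc, tr, ← mul_assoc, hEn, sub_mul, map_sub, smul_mul_assoc, map_smul,
      hDn x hx, zero_sub, neg_eq_zero, smul_eq_mul] at h1
    have h2 := congrArg (fun z => q * z) h1
    simpa [← mul_assoc, qq] using h2
  have key3 : ∀ x ∈ R, D (e 0 * x) = 0 := by
    intro x hx
    have h1 := hD1 _ (R.mul_mem hER hx)
    simpa [Eelt, sub_mul, add_mul, hDn x hx, key1 x hx, key2 x hx] using h1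
  refine ⟨tl, tr, qq, fun y hy => hD1 _ (hW y hy), fun y hy => ?_, fun y hy => ?_, fun y hy => ?_,
    fun y hy => ?_, fun ys hys => ?_, hG⟩
  · rw [W_cons]; exact hDn _ (hW y hy)
  · rw [W_cons]; exact key3 _ (hW y hy)
  · rw [W_cons, W_cons, ← mul_assoc]; exact key1 _ (hW y hy)
  · rw [W_cons, W_cons, ← mul_assoc]; exact key2 _ (hW y hy)
  · refine hD1 _ (Subalgebra.list_prod_mem R fun x hx => ?_)
    obtain ⟨y, hy, rfl⟩ := List.mem_map.1 hx
    exact R.mul_mem hER (hW y (hys y hy))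

end

section
open AffineTL

/-- Index of the generator attached to a letter. -/
def idx (n j : ℕ) : Fin (n + 1) :=
  ⟨if j = 0 then n else if j ≤ n then j - 1 else 0, by split_ifs <;> omega⟩

variable {K : Type*} [CommRing K] {q : K} {n : ℕ}

/-- The Temperley–Lieb generators. -/
noncomputable def eg (q : K) (n : ℕ) (j : ℕ) : ATL K q (n + 1) := 1 + g q (n + 1) (idx n j)

theorem g_quad (hn : 2 ≤ n) (i : Fin (n + 1)) :
    g q (n + 1) i * g q (n + 1) i = (q - 1) • g q (n + 1) i + algebraMap K _ q := by
  have := RingQuot.mkAlgHom_rel K (ATLRel.quad (q := q) (m := n + 1) (by omega) i)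
  simpa [g] using this

theorem g_comm (hn : 2 ≤ n) (i j : Fin (n + 1)) (h1 : i ≠ j) (h2 : j ≠ csucc i)
    (h3 : i ≠ csucc j) : g q (n + 1) i * g q (n + 1) j = g q (n + 1) j * g q (n + 1) i := by
  have := RingQuot.mkAlgHom_rel K (ATLRel.comm (q := q) (m := n + 1) (by omega) i j h1 h2 h3)
  simpa [g] using this

theorem g_braid (hn : 2 ≤ n) (i : Fin (n + 1)) :
    g q (n + 1) i * g q (n + 1) (csucc i) * g q (n + 1) i
      = g q (n + 1) (csucc i) * g q (n + 1) i * g q (n + 1) (csucc i) := by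
  have := RingQuot.mkAlgHom_rel K (ATLRel.braid (q := q) (m := n + 1) (by omega) i)
  simpa [g] using this

theorem g_vrel (hn : 2 ≤ n) (i : Fin (n + 1)) :
    g q (n + 1) i * g q (n + 1) (csucc i) * g q (n + 1) i + g q (n + 1) i * g q (n + 1) (csucc i)
      + g q (n + 1) (csucc i) * g q (n + 1) i + g q (n + 1) i + g q (n + 1) (csucc i) + 1 = 0 := by
  have := RingQuot.mkAlgHom_rel K (ATLRel.vrel (q := q) (m := n + 1) (by omega) i)
  simpa [g] using this

theorem sq_aux {A : Type*} [Ring A] [Algebra K A] (x : A)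
    (hx : x * x = (q - 1) • x + algebraMap K A q) : (1 + x) * (1 + x) = (q + 1) • (1 + x) := by
  have : (1 + x) * (1 + x) = 1 + x + x + x * x := by noncomm_ring
  rw [this, hx, Algebra.algebraMap_eq_smul_one]
  module

theorem br_aux {A : Type*} [Ring A] [Algebra K A] (x y : A)
    (hx : x * x = (q - 1) • x + algebraMap K A q)
    (h : x * y * x + x * y + y * x + x + y + 1 = 0) :
    (1 + x) * (1 + y) * (1 + x) = q • (1 + x) := by
  have : (1 + x) * (1 + y) * (1 + x)
      = (x * y * x + x * y + y * x + x + y + 1) + x + x * x := by noncomm_ring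
  rw [this, h, hx, Algebra.algebraMap_eq_smul_one]
  module

theorem csucc_val (i : Fin (n + 1)) : (csucc i).val = if i.val = n then 0 else i.val + 1 := by
  have h := i.isLt
  simp only [csucc]
  split_ifs with h1
  · rw [h1, Nat.mod_self]
  · exact Nat.mod_eq_of_lt (by omega)

theorem idx_sc (hn : 2 ≤ n) {j : ℕ} (hj : j ≤ n) : idx n (sc n j) = csucc (idx n j) := by
  apply Fin.ext
  rw [csucc_val]
  simp only [idx, sc]
  grind

theorem tlData (hn : 2 ≤ n) : TLData q n (eg q n) := by
  refine ⟨hn, fun i _ => sq_aux _ (g_quad hn _), ?_, ?_, ?_⟩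
  · intro i hi
    unfold eg
    rw [idx_sc hn hi]
    exact br_aux _ _ (g_quad hn _) (g_vrel hn _)
  · intro i hi
    have h1 : idx n i = csucc (idx n (pr n i)) := by
      rw [← idx_sc hn (by unfold pr; split_ifs <;> omega)]
      congr 1
      unfold sc pr
      split_ifs <;> omega
    unfold eg
    rw [h1]
    refine br_aux _ _ (g_quad hn _) ?_
    rw [← g_braid hn, ← g_vrel (q := q) hn (idx n (pr n i))]
    abel
  · intro i j hi hj h1 h2 h3
    refine ((Commute.one_left _).add_left (Commute.add_right (Commute.one_right _) ?_))
    refine g_comm hn _ _ ?_ ?_ ?_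
    · intro h
      have := congrArg Fin.val h
      simp only [idx] at this
      split_ifs at this <;> omega
    · rw [← idx_sc hn hi]
      intro h
      have := congrArg Fin.val h
      simp only [idx, sc] at this h2
      split_ifs at this h2 <;> omega
    · rw [← idx_sc hn hj]
      intro h
      have := congrArg Fin.val h
      simp only [idx, sc, pr] at this h3
      split_ifs at this h3 <;> omega

theorem range_rev (n : ℕ) :
    (List.range (n + 1)).reverse = (List.ofFn fun j : Fin n => n - j.val) ++ [0] := by
  apply List.ext_getElem
  · simp
  · intro i h1 h2
    simp only [List.length_reverse, List.length_range] at h1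
    rw [List.getElem_reverse, List.getElem_range, List.getElem_append]
    split_ifs with h
    · simp
    · simp at h ⊢; omega

theorem bigG_eq : bigG q n = ((List.range (n + 1)).reverse.map fun i => eg q n i - 1).prod := by
  rw [range_rev, List.map_append, List.prod_append, List.map_ofFn, bigG]
  congr 1
  · congr 2
    funext j
    have hj := j.isLt
    simp only [Function.comp, eg, add_sub_cancel_left]
    congr 1
    apply Fin.ext
    simp only [idx]
    split_ifs <;> omega
  · simp [eg, idx, Fin.last]

theorem span_aux (hn : 2 ≤ n) (D : ATL K q (n + 1) →ₗ[K] K)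
    (h : ∀ l : List ℕ, (∀ a ∈ l, a ≤ n) → D (W (eg q n) l) = 0) : D = 0 := by
  let S : Submodule K (ATL K q (n + 1)) :=
    Submodule.span K {x | ∃ l : List ℕ, (∀ a ∈ l, a ≤ n) ∧ x = W (eg q n) l}
  have he : ∀ j ≤ n, ∀ z ∈ S, eg q n j * z ∈ S := by
    intro j hj z hz
    have : S ≤ S.comap (LinearMap.mulLeft K (eg q n j)) := by
      refine Submodule.span_le.2 ?_
      rintro _ ⟨l, hl, rfl⟩
      refine Submodule.subset_span ⟨j :: l, ?_, by rw [W_cons]; rfl⟩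
      intro a ha
      rcases List.mem_cons.1 ha with rfl | ha
      · exact hj
      · exact hl a ha
    exact this hz
  have hmul : ∀ (y : FreeAlgebra K (Fin (n + 1))), ∀ z ∈ S,
      RingQuot.mkAlgHom K (ATLRel q (n + 1)) y * z ∈ S := by
    intro y
    induction y using FreeAlgebra.induction with
    | grade0 r =>
      intro z hz
      rw [AlgHom.commutes, ← Algebra.smul_def]
      exact S.smul_mem r hz
    | grade1 i =>
      intro z hz
      have hi := i.isLt
      obtain ⟨j, hj, hji⟩ : ∃ j ≤ n, idx n j = i := by
        refine ⟨if i.val = n then 0 else i.val + 1, by split_ifs <;> omega, ?_⟩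
        apply Fin.ext
        simp only [idx]
        grind
      have : RingQuot.mkAlgHom K (ATLRel q (n + 1)) (FreeAlgebra.ι K i) * z
          = eg q n j * z - z := by
        rw [eg, hji, add_mul, one_mul, add_sub_cancel_left]; rfl
      rw [this]
      exact S.sub_mem (he j hj z hz) hz
    | mul a b ha hb =>
      intro z hz
      rw [map_mul, mul_assoc]
      exact ha _ (hb z hz)
    | add a b ha hb =>
      intro z hz
      rw [map_add, add_mul]
      exact S.add_mem (ha z hz) (hb z hz)
  have hker : S ≤ LinearMap.ker D := by
    refine Submodule.span_le.2 ?_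
    rintro _ ⟨l, hl, rfl⟩
    exact h l hl
  ext x
  obtain ⟨y, rfl⟩ := RingQuot.mkAlgHom_surjective K (ATLRel q (n + 1)) x
  have h1 : (1 : ATL K q (n + 1)) ∈ S := Submodule.subset_span ⟨[], by simp, rfl⟩
  have := hker (hmul y 1 h1)
  rw [mul_one] at this
  simpa using this

theorem Eelt_aux {A : Type*} [Ring A] [Algebra K A] {q' : K} (qq : q * q' = 1) (s a : A)
    (h : s * a * s + s * a + a * s + s + a + 1 = 0) :
    (1 + s) + (1 + a) - (1 + s) * (1 + a) - q' • ((1 + a) * (1 + s))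
      = 1 + s * a * (q' • (s - algebraMap K A (q - 1))) := by
  have h2 : q' • (s * a * s + s * a + a * s + s + a + 1) = 0 := by rw [h, smul_zero]
  have h3 : q' • (q - 1) • (s * a) = s * a - q' • (s * a) := by
    rw [smul_smul, mul_sub, mul_one, mul_comm q' q, qq, sub_smul, one_smul]
  have h4 : s * a * (q' • (s - algebraMap K A (q - 1)))
      = q' • (s * a * s) - (s * a - q' • (s * a)) := by
    rw [← h3, Algebra.algebraMap_eq_smul_one, mul_smul_comm, mul_sub, mul_smul_comm, mul_one,
      smul_sub]
  rw [h4]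
  have h5 : q' • ((1 + a) * (1 + s)) = q' • (a * s + s + a + 1) := by
    congr 1; noncomm_ring
  have h6 : (1 + s) + (1 + a) - (1 + s) * (1 + a) = 1 - s * a := by noncomm_ring
  rw [h5, h6, ← sub_eq_zero, ← neg_eq_zero, ← h2]
  module

end
end TLWords

open AffineTL in
/-- Lemma 5.1.4: a trace on `TLhat_{n+1}(q)` is determined by its values on
Markov elements together with its values on the powers `G^k`, `k ≥ 1`. -/
theorem statement9 {K : Type*} [CommRing K] [IsDomain K] [CharZero K]
    (q sq : K) (hsq : sq * sq = q) (hq : IsUnit q) (hq1 : IsUnit (q + 1))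
    (n : ℕ) (hn : 2 ≤ n)
    (F : ATL K q n →ₐ[K] ATL K q (n + 1)) (hF : isF q n hn F)
    (τ τ' : ATL K q (n + 1) →ₗ[K] K) (hτ : IsTrace τ) (hτ' : IsTrace τ')
    (hMarkov : ∀ m : ATL K q (n + 1), IsMarkov n (by omega) F m → τ m = τ' m)
    (hG : ∀ k : ℕ, 1 ≤ k → τ ((bigG q n) ^ k) = τ' ((bigG q n) ^ k)) :
    τ = τ' := by
  obtain ⟨hF1, hF2⟩ := hF
  have qq : q * Ring.inverse q = 1 := Ring.mul_inverse_cancel q hq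
  have hen : TLWords.eg q n n = 1 + g q (n + 1) ⟨n - 1, by omega⟩ := by
    rw [TLWords.eg]
    congr 2
    apply Fin.ext
    simp only [TLWords.idx]
    split_ifs <;> omega
  have he0 : TLWords.eg q n 0 = 1 + g q (n + 1) ⟨n, by omega⟩ := by
    simp [TLWords.eg, TLWords.idx]
  have hcs : csucc (⟨n - 1, by omega⟩ : Fin (n + 1)) = ⟨n, by omega⟩ := by
    apply Fin.ext
    rw [TLWords.csucc_val]
    simp only
    split_ifs <;> omega
  have hM : ∀ x ∈ F.range, τ x = τ' x := fun x hx =>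
    hMarkov x ⟨x, 1, hx, F.range.one_mem, Or.inl (by rw [mul_one])⟩
  have hMs : ∀ x ∈ F.range, τ (g q (n + 1) ⟨n - 1, by omega⟩ * x)
      = τ' (g q (n + 1) ⟨n - 1, by omega⟩ * x) := fun x hx =>
    hMarkov _ ⟨1, x, F.range.one_mem, hx, Or.inr (by rw [one_mul])⟩
  have H : TLWords.DData q (Ring.inverse q) n (TLWords.eg q n) (τ - τ') := by
    refine TLWords.mkDData (TLWords.tlData hn) ?_ qq F.range ?_ ?_ ?_ ?_ ?_
    · intro x y
      rw [LinearMap.sub_apply, LinearMap.sub_apply, hτ x y, hτ' x y]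
    · intro j h1 h2
      refine ⟨1 + g q n ⟨j - 1, by omega⟩, ?_⟩
      change F (1 + g q n ⟨j - 1, by omega⟩) = _
      rw [map_add, map_one, hF1 (j - 1) (by omega), TLWords.eg]
      congr 2
      apply Fin.ext
      simp only [TLWords.idx]
      split_ifs <;> omega
    · refine ⟨1 + g q n ⟨n - 1, by omega⟩, ?_⟩
      change F (1 + g q n ⟨n - 1, by omega⟩) = _
      have hv := TLWords.g_vrel (q := q) hn ⟨n - 1, by omega⟩
      rw [hcs] at hv
      rw [map_add, map_one, hF2, TLWords.Eelt, hen, he0, qinv, TLWords.Eelt_aux qq _ _ hv]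
    · intro x hx
      rw [LinearMap.sub_apply, hM x hx, sub_self]
    · intro x hx
      rw [hen, add_mul, one_mul, map_add, LinearMap.sub_apply, LinearMap.sub_apply, hM x hx,
        hMs x hx, sub_self, sub_self, add_zero]
    · intro k hk
      rw [← TLWords.bigG_eq, LinearMap.sub_apply, hG k hk, sub_self]
  exact sub_eq_zero.1 (TLWords.span_aux hn _ fun l hl => H.words (l.length + 1) l hl (by omega))
end

section
/- Let n ≥ 2 and let τ, τ' be traces on TLhat_{n+1}(q). If τ(m) = τ'(m) for every Markov element m of TLhat_{n+1}(q), then τ = τ'. -/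
namespace AffineTL
namespace Core

/-- Abstract affine Temperley-Lieb relations for `e 0, ..., e n`. -/
structure TLData {K A : Type*} [CommRing K] [Ring A] [Algebra K A] (q u : K) (n : ℕ)
    (e : ℕ → A) : Prop where
  hn : 2 ≤ n
  uq : u * q = 1
  sq : ∀ i, i ≤ n → e i * e i = (q + 1) • e i
  up : ∀ i, i < n → e i * e (i + 1) * e i = q • e i
  dn : ∀ i, i < n → e (i + 1) * e i * e (i + 1) = q • e (i + 1)
  cy : e n * e 0 * e n = q • e n
  cm : ∀ i j, i + 2 ≤ j → j ≤ n → ¬ (i = 0 ∧ j = n) → e i * e j = e j * e i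

/-- The product of a word. -/
def W {A : Type*} [Ring A] (e : ℕ → A) (w : List ℕ) : A := (w.map e).prod

section
variable {A : Type*} [Ring A] (e : ℕ → A)
@[simp] lemma W_nil : W e [] = 1 := rfl
@[simp] lemma W_cons (a : ℕ) (w : List ℕ) : W e (a :: w) = e a * W e w := by simp [W]
@[simp] lemma W_append (v w : List ℕ) : W e (v ++ w) = W e v * W e w := by simp [W]

lemma W_comm {a : ℕ} {w : List ℕ} (h : ∀ i ∈ w, e a * e i = e i * e a) :
    e a * W e w = W e w * e a := by
  induction w with
  | nil => simp
  | cons b w ih =>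
    have h1 := h b (by simp)
    have h2 := ih (fun i hi => h i (by simp [hi]))
    rw [W_cons, ← mul_assoc, h1, mul_assoc, h2, mul_assoc]
end

/-- Span of the unit and the generators. -/
def S (K : Type*) {A : Type*} [CommRing K] [Ring A] [Algebra K A] (e : ℕ → A) (n : ℕ) :
    Submodule K A := Submodule.span K (insert 1 (e '' {i | i ≤ n}))

section
variable {K A : Type*} [CommRing K] [Ring A] [Algebra K A] {e : ℕ → A} {n : ℕ}

lemma one_le_S : (1 : Submodule K A) ≤ S K e n := by
  rw [Submodule.one_le]; exact Submodule.subset_span (by simp)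

lemma S_mono {a b : ℕ} (h : a ≤ b) {x : A} (hx : x ∈ S K e n ^ a) : x ∈ S K e n ^ b := by
  obtain ⟨c, rfl⟩ := Nat.exists_eq_add_of_le h
  induction c with
  | zero => simpa using hx
  | succ c ih =>
    have h1 := ih (by omega)
    rw [← add_assoc, pow_succ]
    have := Submodule.mul_mem_mul h1 (Submodule.one_le.1 (one_le_S (K := K) (e := e) (n := n)))
    simpa using this

lemma S_mul {a b c : ℕ} {x y : A} (hx : x ∈ S K e n ^ a) (hy : y ∈ S K e n ^ b)
    (h : a + b ≤ c) : x * y ∈ S K e n ^ c := by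
  apply S_mono h
  rw [pow_add]
  exact Submodule.mul_mem_mul hx hy

lemma S_one {a : ℕ} : (1 : A) ∈ S K e n ^ a :=
  S_mono (Nat.zero_le a) (by rw [pow_zero]; exact Submodule.one_le.1 le_rfl)

lemma S_e {i : ℕ} (hi : i ≤ n) : e i ∈ S K e n ^ 1 := by
  rw [pow_one]; exact Submodule.subset_span (Or.inr ⟨i, hi, rfl⟩)

lemma S_W {w : List ℕ} (h : ∀ i ∈ w, i ≤ n) : W e w ∈ S K e n ^ w.length := by
  induction w with
  | nil => exact S_one
  | cons a w ih =>
    rw [W_cons]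
    exact S_mul (S_e (h a (by simp))) (ih fun i hi => h i (by simp [hi])) (by simp; omega)

lemma S_le_span (L : ℕ) : S K e n ^ L ≤
    Submodule.span K {x | ∃ w : List ℕ, (∀ i ∈ w, i ≤ n) ∧ w.length ≤ L ∧ W e w = x} := by
  induction L with
  | zero =>
    rw [pow_zero, Submodule.one_le]
    exact Submodule.subset_span ⟨[], by simp⟩
  | succ L ih =>
    rw [pow_succ]
    refine (mul_le_mul' ih le_rfl).trans ?_
    rw [S, Submodule.span_mul_span]
    apply Submodule.span_mono
    rintro _ ⟨_, ⟨w, h1, h2, rfl⟩, y, hy, rfl⟩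
    rcases hy with rfl | ⟨i, hi, rfl⟩
    · exact ⟨w, h1, by omega, by simp⟩
    · refine ⟨w ++ [i], ?_, by simp; omega, by simp⟩
      intro j hj
      rcases List.mem_append.1 hj with h | h
      · exact h1 j h
      · simp at h; subst h; exact hi

variable {q u : K} (T : TLData q u n e)
include T

lemma red_sandwich0 {a : ℕ} (ha : a ≤ n) {w : List ℕ} (hw : ∀ i ∈ w, i ≤ n)
    (hc : ∀ i ∈ w, e a * e i = e i * e a) : e a * W e w * e a ∈ S K e n ^ (w.length + 1) := by
  rw [W_comm e hc, mul_assoc, T.sq a ha, mul_smul_comm]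
  exact Submodule.smul_mem _ _ (S_mul (S_W hw) (S_e ha) le_rfl)

lemma red_sandwich1 {a b : ℕ} (ha : a ≤ n) (hab : e a * e b * e a = q • e a)
    {v w : List ℕ} (hv : ∀ i ∈ v, i ≤ n) (hw : ∀ i ∈ w, i ≤ n)
    (hcv : ∀ i ∈ v, e a * e i = e i * e a) (hcw : ∀ i ∈ w, e a * e i = e i * e a) :
    e a * (W e v * (e b * W e w)) * e a ∈ S K e n ^ (v.length + w.length + 1) := by
  have h1 := W_comm e hcv
  have h2 := W_comm e hcw
  have : e a * (W e v * (e b * W e w)) * e a = q • (W e v * e a * W e w) := by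
    calc _ = (e a * W e v) * e b * (W e w * e a) := by simp only [mul_assoc]
      _ = W e v * (e a * e b * e a) * W e w := by rw [h1, ← h2]; simp only [mul_assoc]
      _ = _ := by rw [hab]; simp
  rw [this]
  exact Submodule.smul_mem _ _ (S_mul (S_mul (S_W hv) (S_e ha) le_rfl) (S_W hw) (by omega))

lemma cm' {i j : ℕ} (h : i + 2 ≤ j) (hj : j ≤ n) (h0 : 0 < i ∨ j < n) : e j * e i = e i * e j :=
  (T.cm i j h hj (by omega)).symm

lemma cm'' {i j : ℕ} (h : i + 2 ≤ j) (hj : j ≤ n) (h0 : 0 < i ∨ j < n) : e i * e j = e j * e i :=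
  T.cm i j h hj (by omega)

/-- Two consecutive occurrences of the largest letter. -/
lemma red_hi (h : ℕ) (hh : h < n) (w : List ℕ) (hw : ∀ i ∈ w, i < h) :
    e h * W e w * e h ∈ S K e n ^ (w.length + 1) := by
  induction h generalizing w with
  | zero =>
    have : w = [] := List.eq_nil_iff_forall_not_mem.2 fun i hi => absurd (hw i hi) (by omega)
    subst this
    exact red_sandwich0 T (by omega) (by simp) (by simp)
  | succ h ih =>
    by_cases h1 : h ∈ w
    · obtain ⟨w1, w2, rfl, hw1⟩ := List.eq_append_cons_of_mem h1
      by_cases h2 : h ∈ w2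
      · obtain ⟨w3, w4, rfl, hw3⟩ := List.eq_append_cons_of_mem h2
        have hm := ih (by omega) w3 (fun i hi => by
          have := hw i (by simp [hi])
          have : i ≠ h := fun hh => hw3 (hh ▸ hi)
          omega)
        have e1 : e (h+1) * W e (w1 ++ h :: (w3 ++ h :: w4)) * e (h+1) =
          e (h+1) * W e w1 * (e h * W e w3 * e h) * (W e w4 * e (h+1)) := by
          simp [mul_assoc]
        rw [e1]
        have a1 : W e w1 ∈ S K e n ^ w1.length := S_W fun i hi => by
          have := hw i (by simp [hi])
          omega
        have a4 : W e w4 ∈ S K e n ^ w4.length := S_W fun i hi => by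
          have := hw i (by simp [hi])
          omega
        have ah : e (h+1) ∈ S K e n ^ 1 := S_e (by omega)
        refine S_mul (S_mul (S_mul ah a1 le_rfl) hm le_rfl) (S_mul a4 ah le_rfl) ?_
        simp; omega
      · have c : ∀ i ∈ w1 ++ w2, i < h := fun i hi => by
          have h3 : i < h + 1 := hw i (by simp at hi ⊢; tauto)
          have : i ≠ h := by
            rintro rfl
            simp at hi; tauto
          omega
        have := red_sandwich1 T (a := h+1) (b := h) (by omega) (T.dn h (by omega))
          (v := w1) (w := w2) (fun i hi => by have := c i (by simp [hi]); omega)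
          (fun i hi => by have := c i (by simp [hi]); omega)
          (fun i hi => cm' T (by have := c i (by simp [hi]); omega) (by omega) (by omega))
          (fun i hi => cm' T (by have := c i (by simp [hi]); omega) (by omega) (by omega))
        rw [W_append, W_cons]
        exact S_mono (by simp) this
    · have c : ∀ i ∈ w, i < h := fun i hi => by
        have := hw i hi
        have : i ≠ h := fun hh => h1 (hh ▸ hi)
        omega
      exact red_sandwich0 T (by omega) (fun i hi => by have := c i hi; omega)
        (fun i hi => cm' T (by have := c i hi; omega) (by omega) (by omega))

/-- Two consecutive occurrences of the smallest letter. -/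
lemma red_lo (k l : ℕ) (hk : l + k + 1 = n) (w : List ℕ) (hw : ∀ i ∈ w, l < i ∧ i < n) :
    e l * W e w * e l ∈ S K e n ^ (w.length + 1) := by
  induction k generalizing l w with
  | zero =>
    have : w = [] := List.eq_nil_iff_forall_not_mem.2 fun i hi => absurd (hw i hi) (by omega)
    subst this
    exact red_sandwich0 T (by omega) (by simp) (by simp)
  | succ k ih =>
    by_cases h1 : l + 1 ∈ w
    · obtain ⟨w1, w2, rfl, hw1⟩ := List.eq_append_cons_of_mem h1
      by_cases h2 : l + 1 ∈ w2
      · obtain ⟨w3, w4, rfl, hw3⟩ := List.eq_append_cons_of_mem h2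
        have hm := ih (l+1) (by omega) w3 (fun i hi => by
          have := hw i (by simp [hi])
          have : i ≠ l + 1 := fun hh => hw3 (hh ▸ hi)
          omega)
        have e1 : e l * W e (w1 ++ (l+1) :: (w3 ++ (l+1) :: w4)) * e l =
          e l * W e w1 * (e (l+1) * W e w3 * e (l+1)) * (W e w4 * e l) := by
          simp [mul_assoc]
        rw [e1]
        have a1 : W e w1 ∈ S K e n ^ w1.length := S_W fun i hi => by
          have := hw i (by simp [hi])
          omega
        have a4 : W e w4 ∈ S K e n ^ w4.length := S_W fun i hi => by
          have := hw i (by simp [hi])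
          omega
        have ah : e l ∈ S K e n ^ 1 := S_e (by omega)
        refine S_mul (S_mul (S_mul ah a1 le_rfl) hm le_rfl) (S_mul a4 ah le_rfl) ?_
        simp; omega
      · have c : ∀ i ∈ w1 ++ w2, l + 2 ≤ i ∧ i < n := fun i hi => by
          have h3 := hw i (by simp at hi ⊢; tauto)
          have : i ≠ l + 1 := by
            rintro rfl
            simp at hi; tauto
          omega
        have := red_sandwich1 T (a := l) (b := l + 1) (by omega) (T.up l (by omega))
          (v := w1) (w := w2) (fun i hi => by have := c i (by simp [hi]); omega)
          (fun i hi => by have := c i (by simp [hi]); omega)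
          (fun i hi => by
            have := c i (by simp [hi])
            exact cm'' T (by omega) (by omega) (by omega))
          (fun i hi => by
            have := c i (by simp [hi])
            exact cm'' T (by omega) (by omega) (by omega))
        rw [W_append, W_cons]
        exact S_mono (by simp) this
    · have c : ∀ i ∈ w, l + 2 ≤ i ∧ i < n := fun i hi => by
        have := hw i hi
        have : i ≠ l + 1 := fun hh => h1 (hh ▸ hi)
        omega
      exact red_sandwich0 T (by omega) (fun i hi => by have := c i hi; omega)
        (fun i hi => by
          have := c i hi
          exact cm'' T (by omega) (by omega) (by omega))

/-- The analysis of a word `j Y (n-1)`. -/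
lemma stair (k j : ℕ) (hk : j + k + 2 = n) (Y : List ℕ) (hY : ∀ i ∈ Y, j < i ∧ i + 2 ≤ n) :
    e j * W e Y * e (n-1) ∈ S K e n ^ (Y.length + 1) ∨
    (∃ X : List ℕ, (∀ i ∈ X, j < i ∧ i + 2 ≤ n) ∧ X.length + k = Y.length ∧
      e j * W e Y * e (n-1) = W e X * W e (List.range' j (k+1)) * e (n-1)) ∨
    (∃ X Z : List ℕ, (∀ i ∈ X, j < i ∧ i + 2 ≤ n) ∧ (∀ i ∈ Z, j ≤ i ∧ i + 2 ≤ n) ∧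
      X.length + Z.length = Y.length + 1 ∧
      e j * W e Y * e (n-1) = W e X * e (n-1) * W e Z) := by
  induction k generalizing j Y with
  | zero =>
    have : Y = [] := List.eq_nil_iff_forall_not_mem.2 fun i hi => absurd (hY i hi) (by omega)
    subst this
    right; left
    exact ⟨[], by simp, by simp, by simp⟩
  | succ k ih =>
    by_cases h1 : j + 1 ∈ Y
    · obtain ⟨Y1, Y2, rfl, hY1⟩ := List.eq_append_cons_of_mem h1
      by_cases h2 : j + 1 ∈ Y2
      · left
        obtain ⟨w3, w4, rfl, hw3⟩ := List.eq_append_cons_of_mem h2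
        have hm := red_lo T (k+1) (j+1) (by omega) w3 (fun i hi => by
          have := hY i (by simp [hi])
          have : i ≠ j + 1 := fun hh => hw3 (hh ▸ hi)
          omega)
        have e1 : e j * W e (Y1 ++ (j+1) :: (w3 ++ (j+1) :: w4)) * e (n-1) =
          e j * W e Y1 * (e (j+1) * W e w3 * e (j+1)) * (W e w4 * e (n-1)) := by
          simp [mul_assoc]
        rw [e1]
        have a1 : W e Y1 ∈ S K e n ^ Y1.length := S_W fun i hi => by
          have := hY i (by simp [hi])
          omega
        have a4 : W e w4 ∈ S K e n ^ w4.length := S_W fun i hi => by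
          have := hY i (by simp [hi])
          omega
        refine S_mul (S_mul (S_mul (S_e (i := j) (by omega)) a1 le_rfl) hm le_rfl)
          (S_mul a4 (S_e (by omega)) le_rfl) ?_
        simp; omega
      · have c : ∀ i ∈ Y1 ++ Y2, j + 1 < i ∧ i + 2 ≤ n := fun i hi => by
          have h3 := hY i (by simp at hi ⊢; tauto)
          have : i ≠ j + 1 := by
            rintro rfl
            simp at hi; tauto
          omega
        have cY1 : e j * W e Y1 = W e Y1 * e j := W_comm e fun i hi => by
            have := c i (by simp [hi])
            exact cm'' T (by omega) (by omega) (by omega)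
        have e1 : e j * W e (Y1 ++ (j+1) :: Y2) * e (n-1) =
            W e Y1 * (e j * (e (j+1) * W e Y2 * e (n-1))) := by
          rw [W_append, W_cons, ← mul_assoc, cY1]; simp only [mul_assoc]
        have hY1' : ∀ i ∈ Y1, j < i ∧ i + 2 ≤ n := fun i hi => by
          have := c i (by simp [hi])
          omega
        rw [e1]
        rcases ih (j+1) (by omega) Y2 (fun i hi => c i (by simp [hi])) with
          h | ⟨X, hX, hl, he⟩ | ⟨X, Z, hX, hZ, hl, he⟩
        · left
          exact S_mul (S_W fun i hi => by have := hY1' i hi; omega)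
            (S_mul (S_e (by omega)) h le_rfl) (by simp; omega)
        · right; left
          have cX : e j * W e X = W e X * e j := W_comm e fun i hi => by
            have := hX i hi
            exact cm'' T (by omega) (by omega) (by omega)
          refine ⟨Y1 ++ X, ?_, by simp; omega, ?_⟩
          · intro i hi
            rcases List.mem_append.1 hi with h | h
            · exact hY1' i h
            · have := hX i h
              omega
          · rw [he, List.range'_succ (n := k+1), W_append, W_cons]
            calc _ = W e Y1 * (e j * W e X * (W e (List.range' (j+1) (k+1)) * e (n-1))) := by
                  simp only [mul_assoc]
              _ = _ := by rw [cX]; simp only [mul_assoc]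
        · right; right
          have cX : e j * W e X = W e X * e j := W_comm e fun i hi => by
            have := hX i hi
            exact cm'' T (by omega) (by omega) (by omega)
          have cn : e j * e (n-1) = e (n-1) * e j := cm'' T (by omega) (by omega) (by omega)
          refine ⟨Y1 ++ X, j :: Z, ?_, ?_, by simp; omega, ?_⟩
          · intro i hi
            rcases List.mem_append.1 hi with h | h
            · exact hY1' i h
            · have := hX i h
              omega
          · intro i hi
            rcases List.mem_cons.1 hi with h | h
            · omega
            · have := hZ i h
              omega
          · rw [he, W_append, W_cons]
            calc _ = W e Y1 * (e j * W e X * (e (n-1) * W e Z)) := by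
                  simp only [mul_assoc]
              _ = W e Y1 * W e X * (e j * e (n-1)) * W e Z := by rw [cX]; simp only [mul_assoc]
              _ = _ := by rw [cn]; simp only [mul_assoc]
    · right; right
      have c : ∀ i ∈ Y, j + 1 < i ∧ i + 2 ≤ n := fun i hi => by
        have := hY i hi
        have : i ≠ j + 1 := fun hh => h1 (hh ▸ hi)
        omega
      have cY : e j * W e Y = W e Y * e j := W_comm e fun i hi => by
        have := c i hi
        exact cm'' T (by omega) (by omega) (by omega)
      have cn : e j * e (n-1) = e (n-1) * e j := cm'' T (by omega) (by omega) (by omega)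
      refine ⟨Y, [j], hY, by simp; omega, by simp, ?_⟩
      rw [cY, mul_assoc, cn]; simp [mul_assoc]


/-- Reducible. -/
def R1 (K : Type*) {A : Type*} [CommRing K] [Ring A] [Algebra K A] (e : ℕ → A) (n : ℕ)
    (C : List ℕ) : Prop := ∃ k, k < C.length ∧ W e C ∈ S K e n ^ k
/-- No letter `n-1`. -/
def R2 (K : Type*) {A : Type*} [CommRing K] [Ring A] [Algebra K A] (e : ℕ → A) (n : ℕ)
    (C : List ℕ) : Prop := (∀ i ∈ C, i + 2 ≤ n) ∧ e n * W e C * e n ∈ S K e n ^ (C.length + 1)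
/-- Good words. -/
def IsG {A : Type*} [Ring A] (e : ℕ → A) (n : ℕ) (C : List ℕ) : Prop :=
  ∃ X Z : List ℕ, (∀ i ∈ X, 0 < i ∧ i + 2 ≤ n) ∧ (∀ i ∈ Z, i + 2 ≤ n) ∧
    X.length + Z.length + 1 = C.length ∧ W e C = W e X * e (n-1) * W e Z
/-- Staircase words. -/
def IsAl {A : Type*} [Ring A] (e : ℕ → A) (n : ℕ) (C : List ℕ) : Prop :=
  ∃ X Z : List ℕ, (∀ i ∈ X, 0 < i ∧ i + 2 ≤ n) ∧ (∀ i ∈ Z, 0 < i ∧ i + 2 ≤ n) ∧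
    X.length + Z.length + n = C.length ∧
    W e C = W e X * (W e (List.range' 0 (n-1)) * e (n-1)) * W e Z

lemma R1_of_mid {C X Y Z : List ℕ} (hC : ∀ i ∈ C, i ≤ n) (h : C = X ++ Y ++ Z)
    (hY : ∃ k, k < Y.length ∧ W e Y ∈ S K e n ^ k) : R1 K e n C := by
  obtain ⟨k, hk, hm⟩ := hY
  subst h
  refine ⟨X.length + k + Z.length, by simp; omega, ?_⟩
  rw [W_append, W_append]
  exact S_mul (S_mul (S_W fun i hi => hC i (by simp [hi])) hm le_rfl)
    (S_W fun i hi => hC i (by simp [hi])) le_rfl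

lemma classify (C : List ℕ) (hC : ∀ i ∈ C, i < n) :
    R1 K e n C ∨ R2 K e n C ∨ IsG e n C ∨ IsAl e n C := by
  have hn := T.hn
  have hC' : ∀ i ∈ C, i ≤ n := fun i hi => (hC i hi).le
  -- `0` twice is reducible
  have two0 : ∀ X Y Z : List ℕ, C = X ++ (0 :: Y ++ [0]) ++ Z → 0 ∉ Y → R1 K e n C := by
    intro X Y Z h h0
    refine R1_of_mid T hC' h ⟨Y.length + 1, by simp, ?_⟩
    have := red_lo T (n-1) 0 (by omega) Y (fun i hi => by
      have := hC i (by rw [h]; simp [hi])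
      have : i ≠ 0 := fun hh => h0 (hh ▸ hi)
      omega)
    simpa [mul_assoc] using this
  by_cases h1 : n - 1 ∈ C
  · obtain ⟨X, Z, rfl, hX⟩ := List.eq_append_cons_of_mem h1
    by_cases h2 : n - 1 ∈ Z
    · left
      obtain ⟨Y, Z, rfl, hY⟩ := List.eq_append_cons_of_mem h2
      refine R1_of_mid T hC' (X := X) (Y := (n-1) :: Y ++ [n-1]) (Z := Z) (by simp)
        ⟨Y.length + 1, by simp, ?_⟩
      have := red_hi T (n-1) (by omega) Y (fun i hi => by
        have := hC i (by simp [hi])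
        have : i ≠ n - 1 := fun hh => hY (hh ▸ hi)
        omega)
      simpa [mul_assoc] using this
    · have hXZ : ∀ i ∈ X ++ Z, i + 2 ≤ n := fun i hi => by
        have h3 := hC i (by simp at hi ⊢; tauto)
        have : i ≠ n - 1 := by
          rintro rfl
          simp at hi; tauto
        omega
      by_cases h0 : 0 ∈ X
      · obtain ⟨X1, Y, rfl, hX1⟩ := List.eq_append_cons_of_mem h0
        by_cases h0Y : 0 ∈ Y
        · left
          obtain ⟨Y1, Y2, rfl, hY1⟩ := List.eq_append_cons_of_mem h0Y
          exact two0 X1 Y1 (Y2 ++ (n-1) :: Z) (by simp) hY1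
        · by_cases h0Z : 0 ∈ Z
          · left
            obtain ⟨Z1, Z2, rfl, hZ1⟩ := List.eq_append_cons_of_mem h0Z
            refine two0 X1 (Y ++ (n-1) :: Z1) Z2 (by simp) ?_
            simp; refine ⟨h0Y, by omega, hZ1⟩
          · have hX1' : ∀ i ∈ X1, 0 < i ∧ i + 2 ≤ n := fun i hi =>
              ⟨Nat.pos_of_ne_zero fun hh => hX1 (hh ▸ hi), hXZ i (by simp [hi])⟩
            have hZ' : ∀ i ∈ Z, 0 < i ∧ i + 2 ≤ n := fun i hi =>
              ⟨Nat.pos_of_ne_zero fun hh => h0Z (hh ▸ hi), hXZ i (by simp [hi])⟩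
            have hY' : ∀ i ∈ Y, 0 < i ∧ i + 2 ≤ n := fun i hi =>
              ⟨Nat.pos_of_ne_zero fun hh => h0Y (hh ▸ hi), hXZ i (by simp [hi])⟩
            have e1 : W e ((X1 ++ 0 :: Y) ++ (n-1) :: Z) =
              W e X1 * (e 0 * W e Y * e (n-1)) * W e Z := by simp [mul_assoc]
            rcases stair T (n-2) 0 (by omega) Y hY' with
              h | ⟨X, hX, hl, he⟩ | ⟨X, Z', hX, hZ, hl, he⟩
            · left
              refine R1_of_mid T hC' (X := X1) (Y := 0 :: Y ++ [n-1]) (Z := Z) (by simp)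
                ⟨Y.length + 1, by simp, ?_⟩
              simpa [mul_assoc] using h
            · right; right; right
              refine ⟨X1 ++ X, Z, ?_, hZ', by simp; omega, ?_⟩
              · intro i hi
                rcases List.mem_append.1 hi with h | h
                · exact hX1' i h
                · exact hX i h
              · rw [e1, he, show n - 2 + 1 = n - 1 by omega, W_append]
                simp only [mul_assoc]
            · right; right; left
              refine ⟨X1 ++ X, Z' ++ Z, ?_, ?_, by simp; omega, ?_⟩
              · intro i hi
                rcases List.mem_append.1 hi with h | h
                · exact hX1' i h
                · exact hX i h
              · intro i hi
                rcases List.mem_append.1 hi with h | h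
                · exact (hZ i h).2
                · exact (hZ' i h).2
              · rw [e1, he, W_append, W_append]
                simp only [mul_assoc]
      · right; right; left
        exact ⟨X, Z, fun i hi => ⟨Nat.pos_of_ne_zero fun hh => h0 (hh ▸ hi),
          hXZ i (by simp [hi])⟩, fun i hi => hXZ i (by simp [hi]), by simp; omega,
          by simp [mul_assoc]⟩
  · have hC2 : ∀ i ∈ C, i + 2 ≤ n := fun i hi => by
      have := hC i hi
      have : i ≠ n - 1 := fun hh => h1 (hh ▸ hi)
      omega
    by_cases h0 : 0 ∈ C
    · obtain ⟨X1, Y, rfl, hX1⟩ := List.eq_append_cons_of_mem h0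
      by_cases h0Y : 0 ∈ Y
      · left
        obtain ⟨Y1, Y2, rfl, hY1⟩ := List.eq_append_cons_of_mem h0Y
        exact two0 X1 Y1 Y2 (by simp) hY1
      · right; left
        refine ⟨hC2, ?_⟩
        have c1 : ∀ i ∈ X1, 0 < i ∧ i + 2 ≤ n := fun i hi =>
          ⟨Nat.pos_of_ne_zero fun hh => hX1 (hh ▸ hi), hC2 i (by simp [hi])⟩
        have c2 : ∀ i ∈ Y, 0 < i ∧ i + 2 ≤ n := fun i hi =>
          ⟨Nat.pos_of_ne_zero fun hh => h0Y (hh ▸ hi), hC2 i (by simp [hi])⟩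
        have := red_sandwich1 T (a := n) (b := 0) le_rfl T.cy (v := X1) (w := Y)
          (fun i hi => hC' i (by simp [hi])) (fun i hi => hC' i (by simp [hi]))
          (fun i hi => by
            have := c1 i hi
            exact cm' T (by omega) le_rfl (by omega))
          (fun i hi => by
            have := c2 i hi
            exact cm' T (by omega) le_rfl (by omega))
        rw [W_append, W_cons]
        exact S_mono (by simp) this
    · right; left
      refine ⟨hC2, red_sandwich0 T le_rfl hC' fun i hi => ?_⟩
      have : i ≠ 0 := fun hh => h0 (hh ▸ hi)
      exact cm' T (hC2 i hi) le_rfl (by omega)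

lemma al_mul {i : ℕ} (hi : i + 2 ≤ n) :
    W e (List.range' 0 (n-1)) * e (n-1) * e i ∈ S K e n ^ n := by
  have hn := T.hn
  have e1 : W e (List.range' 0 (n-1)) * e (n-1) = W e (List.range' 0 n) := by
    obtain ⟨m, rfl⟩ : ∃ m, n = m + 1 := ⟨n - 1, by omega⟩
    rw [List.range'_concat]
    simp
  have e2 : List.range' 0 n = List.range' 0 i ++ (i :: (i+1) :: List.range' (i+2) (n-i-2)) := by
    obtain ⟨m, rfl⟩ : ∃ m, n = i + (m + 1 + 1) := ⟨n - i - 2, by omega⟩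
    rw [← List.range'_append_1, List.range'_succ, List.range'_succ]
    simp
  rw [e1, e2]
  have := red_sandwich1 T (a := i) (b := i+1) (by omega) (T.up i (by omega)) (v := [])
    (w := List.range' (i+2) (n-i-2)) (by simp)
    (fun j hj => by rw [List.mem_range'_1] at hj; omega)
    (by simp)
    (fun j hj => by
      rw [List.mem_range'_1] at hj
      exact cm'' T (by omega) (by omega) (by omega))
  have e3 : W e (List.range' 0 i ++ (i :: (i+1) :: List.range' (i+2) (n-i-2))) * e i =
    W e (List.range' 0 i) * (e i * (W e [] * (e (i+1) * W e (List.range' (i+2) (n-i-2)))) * e i) := by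
    simp [mul_assoc]
  rw [e3]
  refine S_mul (S_W fun j hj => ?_) this (by simp; omega)
  rw [List.mem_range'_1] at hj; omega

lemma en_comm {X : List ℕ} (hX : ∀ i ∈ X, 0 < i ∧ i + 2 ≤ n) : e n * W e X = W e X * e n :=
  W_comm e fun i hi => cm' T (hX i hi).2 le_rfl (Or.inl (hX i hi).1)

lemma adj {C1 C2 : List ℕ} (h1 : IsAl e n C1) (h2 : IsG e n C2) :
    e n * W e C1 * (e n * W e C2) ∈ S K e n ^ (C1.length + C2.length + 1) := by
  have hn := T.hn
  obtain ⟨X, Z, hX, hZ, hl, he⟩ := h1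
  obtain ⟨X', Z', hX', hZ', hl', he'⟩ := h2
  have hZX : ∀ i ∈ Z ++ X', 0 < i ∧ i + 2 ≤ n := by
    intro i hi
    rcases List.mem_append.1 hi with h | h
    · exact hZ i h
    · exact hX' i h
  have c := en_comm T hX'
  have hlen : (Z ++ X').length = Z.length + X'.length := by simp
  have e1 : e n * W e C1 * (e n * W e C2) = e n * W e X *
      (W e (List.range' 0 (n-1)) * e (n-1) * W e (Z ++ X') * e n * e (n-1)) * W e Z' := by
    rw [he, he', W_append]
    calc _ = e n * W e X *
      (W e (List.range' 0 (n-1)) * e (n-1) * W e Z * (e n * W e X') * e (n-1)) * W e Z' := by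
          simp only [mul_assoc]
      _ = _ := by rw [c]; simp only [mul_assoc]
  rw [e1]
  have hXm : W e X ∈ S K e n ^ X.length := S_W fun i hi => by have := hX i hi; omega
  have hZm : W e Z' ∈ S K e n ^ Z'.length := S_W fun i hi => by have := hZ' i hi; omega
  have key : W e (List.range' 0 (n-1)) * e (n-1) * W e (Z ++ X') * e n * e (n-1) ∈
      S K e n ^ (n + (Z ++ X').length + 1) := by
    generalize Z ++ X' = V at hZX
    cases V with
    | nil =>
      have := T.up (n-1) (by omega)
      rw [show n - 1 + 1 = n by omega] at this
      have e2 : W e (List.range' 0 (n-1)) * e (n-1) * W e [] * e n * e (n-1) =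
        W e (List.range' 0 (n-1)) * (e (n-1) * e n * e (n-1)) := by simp [mul_assoc]
      rw [e2, this]
      refine S_mul (S_W fun j hj => ?_) (Submodule.smul_mem _ _ (S_e (by omega))) (by simp)
      rw [List.mem_range'_1] at hj; omega
    | cons i V =>
      rw [W_cons, ← mul_assoc]
      have hV : W e V ∈ S K e n ^ V.length :=
        S_W fun j hj => by have := hZX j (by simp [hj]); omega
      exact S_mul (S_mul (S_mul (al_mul T (hZX i (by simp)).2) hV le_rfl) (S_e le_rfl) le_rfl)
        (S_e (by omega)) (by simp)
  exact S_mul (S_mul (S_mul (S_e le_rfl) hXm le_rfl) key le_rfl) hZm (by omega)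

omit T in
lemma en_lt (hn : 2 ≤ n) {X : List ℕ} (hX : ∀ i ∈ X, i + 2 ≤ n) :
    W e X ∈ S K e n ^ X.length :=
  S_W fun i hi => by have := hX i hi; omega

/-- The image of the last generator of the smaller algebra. -/
def ep {K A : Type*} [CommRing K] [Ring A] [Algebra K A] (u : K) (e : ℕ → A) (n : ℕ) : A :=
  e (n-1) + e n - e (n-1) * e n - u • (e n * e (n-1))

/-- A trace vanishing on Markov elements. -/
structure MData {K A : Type*} [CommRing K] [Ring A] [Algebra K A] (u : K) (n : ℕ)
    (e : ℕ → A) (D : A →ₗ[K] K) (B : Subalgebra K A) : Prop where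
  tr : ∀ x y, D (x * y) = D (y * x)
  hB : ∀ b ∈ B, D b = 0
  hBB : ∀ a ∈ B, ∀ b ∈ B, D (a * e (n-1) * b) = 0
  he : ∀ i, i + 2 ≤ n → e i ∈ B
  hep : ep u e n ∈ B

lemma ep_mul : ep u e n * e (n-1) = e (n-1) - u • (e n * e (n-1)) := by
  have hn := T.hn
  have h1 := T.up (n-1) (by omega)
  rw [show n - 1 + 1 = n by omega] at h1
  have h2 := T.sq (n-1) (by omega)
  simp only [ep, sub_mul, add_mul, smul_mul_assoc]
  rw [h1, mul_assoc (e n), h2, mul_smul_comm, smul_smul, mul_add, T.uq]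
  module

lemma mul_ep : e (n-1) * ep u e n = q • e (n-1) - q • (e (n-1) * e n) := by
  have hn := T.hn
  have h1 := T.up (n-1) (by omega)
  rw [show n - 1 + 1 = n by omega] at h1
  have h2 := T.sq (n-1) (by omega)
  simp only [ep, mul_sub, mul_add, mul_smul_comm]
  rw [← mul_assoc, ← mul_assoc, h1, h2, smul_mul_assoc, smul_smul, T.uq]
  module

lemma en_eq : e n = ep u e n + e (n-1) - u • (e (n-1) * ep u e n) - ep u e n * e (n-1) := by
  rw [ep_mul T, mul_ep T, smul_sub, smul_smul, smul_smul, T.uq, ep]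
  module

lemma ep_mem : ep u e n ∈ S K e n ^ 2 := by
  have a : e (n-1) ∈ S K e n ^ 1 := S_e (by omega)
  have b : e n ∈ S K e n ^ 1 := S_e le_rfl
  exact Submodule.sub_mem _ (Submodule.sub_mem _ (Submodule.add_mem _ (S_mono (by omega) a)
    (S_mono (by omega) b)) (S_mul a b le_rfl)) (Submodule.smul_mem _ _ (S_mul b a le_rfl))

/-- Product over blocks. -/
def Bl {A : Type*} [Ring A] (e : ℕ → A) (x : A) (bs : List (List ℕ × List ℕ)) : A :=
  (bs.map fun p => W e p.1 * x * W e p.2).prod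

/-- Length of blocks. -/
def lnB (bs : List (List ℕ × List ℕ)) : ℕ := (bs.map fun p => p.1.length + p.2.length + 2).sum

/-- Valid blocks. -/
def okB (n : ℕ) (bs : List (List ℕ × List ℕ)) : Prop :=
  ∀ p ∈ bs, (∀ i ∈ p.1, i + 2 ≤ n) ∧ (∀ i ∈ p.2, i + 2 ≤ n)

lemma Bl_mem {x : A} (hx : x ∈ S K e n ^ 2) (bs : List (List ℕ × List ℕ)) (h : okB n bs) :
    Bl e x bs ∈ S K e n ^ lnB bs := by
  induction bs with
  | nil => exact S_one
  | cons p bs ih =>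
    have h1 := h p (by simp)
    have h2 := ih fun p hp => h p (by simp [hp])
    have e1 : Bl e x (p :: bs) = W e p.1 * x * W e p.2 * Bl e x bs := by simp [Bl]
    rw [e1]
    exact S_mul (S_mul (S_mul (en_lt T.hn h1.1) hx le_rfl) (en_lt T.hn h1.2) le_rfl) h2
      (by simp [lnB]; omega)

omit T in
lemma W_memB {B : Subalgebra K A} (he : ∀ i, i + 2 ≤ n → e i ∈ B) {w : List ℕ}
    (hw : ∀ i ∈ w, i + 2 ≤ n) : W e w ∈ B := by
  induction w with
  | nil => exact B.one_mem
  | cons a w ih =>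
    rw [W_cons]
    exact B.mul_mem (he a (hw a (by simp))) (ih fun i hi => hw i (by simp [hi]))

omit T in
lemma Bl_memB {D : A →ₗ[K] K} {B : Subalgebra K A} (M : MData u n e D B)
    (bs : List (List ℕ × List ℕ)) (h : okB n bs) :
    Bl e (ep u e n) bs ∈ B := by
  refine B.list_prod_mem fun x hx => ?_
  obtain ⟨p, hp, rfl⟩ := List.mem_map.1 hx
  exact B.mul_mem (B.mul_mem (W_memB M.he (h p hp).1) M.hep) (W_memB M.he (h p hp).2)

lemma red_top {V : List ℕ} (hV : ∀ i ∈ V, i + 2 ≤ n) :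
    e (n-1) * W e V * e (n-1) ∈ S K e n ^ (V.length + 1) := by
  have hn := T.hn
  exact red_hi T (n-1) (by omega) V fun i hi => by have := hV i hi; omega

omit T in
lemma ok_app {X Y : List ℕ} (hX : ∀ i ∈ X, i + 2 ≤ n) (hY : ∀ i ∈ Y, i + 2 ≤ n) :
    ∀ i ∈ X ++ Y, i + 2 ≤ n := by
  intro i hi
  rcases List.mem_append.1 hi with h | h
  · exact hX i h
  · exact hY i h

lemma expand_down (bs : List (List ℕ × List ℕ)) (h : okB n bs) (X Z : List ℕ)
    (hX : ∀ i ∈ X, i + 2 ≤ n) (hZ : ∀ i ∈ Z, i + 2 ≤ n) :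
    ∃ c : K, IsUnit c ∧ W e X * (e n * e (n-1)) * W e Z * Bl e (ep u e n) bs -
      c • (W e X * (e n * e (n-1)) * W e Z * Bl e (e n * e (n-1)) bs) ∈
      S K e n ^ (X.length + Z.length + 1 + lnB bs) := by
  induction bs generalizing X Z with
  | nil => exact ⟨1, isUnit_one, by simp [Bl]⟩
  | cons p bs ih =>
    obtain ⟨X2, Z2⟩ := p
    obtain ⟨h2, h3⟩ := h (X2, Z2) (by simp)
    change ∀ i ∈ X2, i + 2 ≤ n at h2
    change ∀ i ∈ Z2, i + 2 ≤ n at h3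
    have hbs : okB n bs := fun p hp => h p (by simp [hp])
    obtain ⟨c, hc, hm⟩ := ih hbs X2 Z2 h2 h3
    have hu : IsUnit u := .of_mul_eq_one _ T.uq
    refine ⟨-u * c, hu.neg.mul hc, ?_⟩
    have e1 : ∀ x, Bl e x ((X2, Z2) :: bs) = W e X2 * x * W e Z2 * Bl e x bs := by
      intro x; simp [Bl]
    have hl : lnB ((X2, Z2) :: bs) = X2.length + Z2.length + 2 + lnB bs := by simp [lnB]
    rw [e1, e1, hl]
    have mX := en_lt (K := K) (e := e) T.hn hX
    have mZ := en_lt (K := K) (e := e) T.hn hZ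
    have mX2 := en_lt (K := K) (e := e) T.hn h2
    have mZ2 := en_lt (K := K) (e := e) T.hn h3
    have mQ := Bl_mem T (ep_mem T) bs hbs
    have mt := red_top T (ok_app hZ h2)
    have a : e (n-1) ∈ S K e n ^ 1 := S_e (by omega)
    have b : e n ∈ S K e n ^ 1 := S_e le_rfl
    have mP := S_mul (S_mul mX (S_mul b a le_rfl) le_rfl) mZ le_rfl
    have mR := S_mul mZ2 mQ le_rfl
    have t1 := S_mul (c := X.length + Z.length + 1 + (X2.length + Z2.length + 2 + lnB bs))
      (S_mul mP mX2 le_rfl) (S_mul (Submodule.add_mem _ a b) mR le_rfl) (by omega)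
    have t2 := S_mul (c := X.length + Z.length + 1 + (X2.length + Z2.length + 2 + lnB bs))
      (S_mul (S_mul mX b le_rfl) mt le_rfl) (S_mul b mR le_rfl) (by simp; omega)
    have t3 := S_mul (c := X.length + Z.length + 1 + (X2.length + Z2.length + 2 + lnB bs))
      mP hm (by omega)
    have := Submodule.sub_mem _ (Submodule.sub_mem _ t1 t2) (Submodule.smul_mem _ u t3)
    convert this using 1
    rw [W_append]
    simp only [ep, mul_sub, sub_mul, mul_add, add_mul, mul_assoc, smul_sub, smul_smul,
      mul_smul_comm, smul_mul_assoc]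
    module

lemma expand_up (bs : List (List ℕ × List ℕ)) (h : okB n bs) (X Z : List ℕ)
    (hX : ∀ i ∈ X, i + 2 ≤ n) (hZ : ∀ i ∈ Z, i + 2 ≤ n) :
    ∃ c : K, IsUnit c ∧ Bl e (ep u e n) bs * (W e X * (e (n-1) * e n) * W e Z) -
      c • (Bl e (e (n-1) * e n) bs * (W e X * (e (n-1) * e n) * W e Z)) ∈
      S K e n ^ (X.length + Z.length + 1 + lnB bs) := by
  induction bs using List.reverseRecOn generalizing X Z with
  | nil => exact ⟨1, isUnit_one, by simp [Bl]⟩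
  | append_singleton bs p ih =>
    obtain ⟨X2, Z2⟩ := p
    obtain ⟨h2, h3⟩ := h (X2, Z2) (by simp)
    change ∀ i ∈ X2, i + 2 ≤ n at h2
    change ∀ i ∈ Z2, i + 2 ≤ n at h3
    have hbs : okB n bs := fun p hp => h p (by simp [hp])
    obtain ⟨c, hc, hm⟩ := ih hbs X2 Z2 h2 h3
    refine ⟨-c, hc.neg, ?_⟩
    have e1 : ∀ x, Bl e x (bs ++ [(X2, Z2)]) = Bl e x bs * (W e X2 * x * W e Z2) := by
      intro x; simp [Bl]
    have hl : lnB (bs ++ [(X2, Z2)]) = X2.length + Z2.length + 2 + lnB bs := by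
      simp [lnB]; omega
    rw [e1, e1, hl]
    have mX := en_lt (K := K) (e := e) T.hn hX
    have mZ := en_lt (K := K) (e := e) T.hn hZ
    have mX2 := en_lt (K := K) (e := e) T.hn h2
    have mZ2 := en_lt (K := K) (e := e) T.hn h3
    have mQ := Bl_mem T (ep_mem T) bs hbs
    have mt := red_top T (ok_app h3 hX)
    have a : e (n-1) ∈ S K e n ^ 1 := S_e (by omega)
    have b : e n ∈ S K e n ^ 1 := S_e le_rfl
    have mP := S_mul (S_mul mX (S_mul a b le_rfl) le_rfl) mZ le_rfl
    have mR := S_mul mQ mX2 le_rfl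
    have t1 := S_mul (c := X.length + Z.length + 1 + (X2.length + Z2.length + 2 + lnB bs))
      (S_mul mR (Submodule.add_mem _ a b) le_rfl) (S_mul mZ2 mP le_rfl) (by omega)
    have t2 := S_mul (c := X.length + Z.length + 1 + (X2.length + Z2.length + 2 + lnB bs))
      (S_mul (S_mul mR b le_rfl) mt le_rfl) (S_mul b mZ le_rfl) (by simp; omega)
    have t3 := S_mul (c := X.length + Z.length + 1 + (X2.length + Z2.length + 2 + lnB bs))
      hm mP (by omega)
    have := Submodule.sub_mem _ (Submodule.sub_mem _ t1 (Submodule.smul_mem _ u t2)) t3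
    convert this using 1
    rw [W_append]
    simp only [ep, mul_sub, sub_mul, mul_add, add_mul, mul_assoc, smul_sub, smul_smul,
      mul_smul_comm, smul_mul_assoc]
    module

lemma good_down {D : A →ₗ[K] K} {B : Subalgebra K A} (M : MData u n e D B)
    (bs : List (List ℕ × List ℕ)) (h : okB n bs) (h0 : bs ≠ [])
    (hD : ∀ k, k < lnB bs → ∀ x ∈ S K e n ^ k, D x = 0) :
    D (Bl e (e n * e (n-1)) bs) = 0 := by
  cases bs with
  | nil => exact absurd rfl h0
  | cons p bs =>
    obtain ⟨X, Z⟩ := p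
    obtain ⟨h2, h3⟩ := h (X, Z) (by simp)
    change ∀ i ∈ X, i + 2 ≤ n at h2
    change ∀ i ∈ Z, i + 2 ≤ n at h3
    have hbs : okB n bs := fun p hp => h p (by simp [hp])
    have hu : IsUnit u := .of_mul_eq_one _ T.uq
    obtain ⟨c, hc, hm⟩ := expand_down T bs hbs X Z h2 h3
    have hl : lnB ((X, Z) :: bs) = X.length + Z.length + 2 + lnB bs := by simp [lnB]
    have e1 : ∀ x, Bl e x ((X, Z) :: bs) = W e X * x * W e Z * Bl e x bs := by
      intro x; simp [Bl]
    have d1 := hD _ (by omega) _ hm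
    have d2 := M.hBB _ (B.mul_mem (W_memB M.he h2) M.hep) _
      (B.mul_mem (W_memB M.he h3) (Bl_memB M bs hbs))
    have a : e (n-1) ∈ S K e n ^ 1 := S_e (by omega)
    have d3 := hD (X.length + 1 + Z.length + lnB bs) (by omega) _
      (S_mul (S_mul (S_mul (en_lt T.hn h2) a le_rfl) (en_lt T.hn h3) le_rfl)
        (Bl_mem T (ep_mem T) bs hbs) le_rfl)
    rw [mul_assoc (W e X), ep_mul T] at d2
    have e2 : W e X * (e (n-1) - u • (e n * e (n-1))) * (W e Z * Bl e (ep u e n) bs) =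
      W e X * e (n-1) * W e Z * Bl e (ep u e n) bs -
       u • (W e X * (e n * e (n-1)) * W e Z * Bl e (ep u e n) bs) := by
      simp only [mul_sub, sub_mul, mul_assoc, mul_smul_comm, smul_mul_assoc]
    rw [e2, map_sub, d3, zero_sub, neg_eq_zero, map_smul, smul_eq_mul, hu.mul_right_eq_zero] at d2
    rw [map_sub, d2, zero_sub, neg_eq_zero, map_smul, smul_eq_mul, hc.mul_right_eq_zero] at d1
    rw [e1, d1]

lemma good_up {D : A →ₗ[K] K} {B : Subalgebra K A} (M : MData u n e D B)
    (bs : List (List ℕ × List ℕ)) (h : okB n bs) (h0 : bs ≠ [])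
    (hD : ∀ k, k < lnB bs → ∀ x ∈ S K e n ^ k, D x = 0) :
    D (Bl e (e (n-1) * e n) bs) = 0 := by
  induction bs using List.reverseRecOn with
  | nil => exact absurd rfl h0
  | append_singleton bs p ih =>
    clear ih
    obtain ⟨X, Z⟩ := p
    obtain ⟨h2, h3⟩ := h (X, Z) (by simp)
    change ∀ i ∈ X, i + 2 ≤ n at h2
    change ∀ i ∈ Z, i + 2 ≤ n at h3
    have hbs : okB n bs := fun p hp => h p (by simp [hp])
    have hu : IsUnit q := .of_mul_eq_one u (by rw [mul_comm]; exact T.uq)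
    obtain ⟨c, hc, hm⟩ := expand_up T bs hbs X Z h2 h3
    have hl : lnB (bs ++ [(X, Z)]) = X.length + Z.length + 2 + lnB bs := by
      simp [lnB]; omega
    have e1 : ∀ x, Bl e x (bs ++ [(X, Z)]) = Bl e x bs * (W e X * x * W e Z) := by
      intro x; simp [Bl]
    have d1 := hD _ (by omega) _ hm
    have d2 := M.hBB _ (B.mul_mem (Bl_memB M bs hbs) (W_memB M.he h2)) _
      (B.mul_mem M.hep (W_memB M.he h3))
    have a : e (n-1) ∈ S K e n ^ 1 := S_e (by omega)
    have d3 := hD (lnB bs + (X.length + 1 + Z.length)) (by omega) _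
      (S_mul (Bl_mem T (ep_mem T) bs hbs)
        (S_mul (S_mul (en_lt T.hn h2) a le_rfl) (en_lt T.hn h3) le_rfl) le_rfl)
    rw [mul_assoc, ← mul_assoc (e (n-1)), mul_ep T] at d2
    have e2 : Bl e (ep u e n) bs * W e X * ((q • e (n-1) - q • (e (n-1) * e n)) * W e Z) =
      q • (Bl e (ep u e n) bs * (W e X * e (n-1) * W e Z)) -
       q • (Bl e (ep u e n) bs * (W e X * (e (n-1) * e n) * W e Z)) := by
      simp only [mul_sub, sub_mul, mul_assoc, mul_smul_comm, smul_mul_assoc]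
    rw [e2, map_sub, map_smul, d3, smul_zero, zero_sub, neg_eq_zero, map_smul, smul_eq_mul,
      hu.mul_right_eq_zero] at d2
    rw [map_sub, d2, zero_sub, neg_eq_zero, map_smul, smul_eq_mul, hc.mul_right_eq_zero] at d1
    rw [e1, d1]

/-- Product of `e n * C`. -/
def P {A : Type*} [Ring A] (e : ℕ → A) (n : ℕ) (Cs : List (List ℕ)) : A :=
  (Cs.map fun C => e n * W e C).prod

/-- Total length. -/
def lnP (Cs : List (List ℕ)) : ℕ := (Cs.map fun C => C.length + 1).sum

omit T in
lemma P_cons (C : List ℕ) (Cs : List (List ℕ)) : P e n (C :: Cs) = e n * W e C * P e n Cs := by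
  simp [P]
omit T in
lemma P_append (Cs Ds : List (List ℕ)) : P e n (Cs ++ Ds) = P e n Cs * P e n Ds := by
  simp [P]
omit T in
lemma lnP_cons (C : List ℕ) (Cs : List (List ℕ)) : lnP (C :: Cs) = C.length + 1 + lnP Cs := by
  simp [lnP]
omit T in
lemma lnP_append (Cs Ds : List (List ℕ)) : lnP (Cs ++ Ds) = lnP Cs + lnP Ds := by
  simp [lnP]

omit T in
lemma P_mem (Cs : List (List ℕ)) (h : ∀ C ∈ Cs, ∀ i ∈ C, i < n) :
    P e n Cs ∈ S K e n ^ lnP Cs := by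
  induction Cs with
  | nil => exact S_one
  | cons C Cs ih =>
    rw [P_cons, lnP_cons]
    exact S_mul (S_mul (S_e le_rfl) (S_W fun i hi => (h C (by simp) i hi).le) le_rfl)
      (ih fun C hC => h C (by simp [hC])) (by omega)

lemma P_adj (Cs : List (List ℕ)) (h : ∀ C ∈ Cs, ∀ i ∈ C, i < n)
    (hc : ∀ C ∈ Cs, IsAl e n C ∨ IsG e n C) (C0 : List ℕ) (hC0 : ∀ i ∈ C0, i < n)
    (h0 : IsAl e n C0) (hex : ¬ ∀ C ∈ Cs, IsAl e n C) :
    P e n (C0 :: Cs) ∈ S K e n ^ (C0.length + lnP Cs) := by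
  induction Cs generalizing C0 with
  | nil => exact absurd (by simp) hex
  | cons C Cs ih =>
    by_cases hA : IsAl e n C
    · have := ih (fun C hC => h C (by simp [hC])) (fun C hC => hc C (by simp [hC])) C
        (h C (by simp)) hA (fun hh => hex (by simpa using ⟨hA, hh⟩))
      rw [P_cons]
      exact S_mul (S_mul (S_e le_rfl) (S_W fun i hi => (hC0 i hi).le) le_rfl) this
        (by rw [lnP_cons]; omega)
    · have hG := (hc C (by simp)).resolve_left hA
      rw [P_cons, P_cons, ← mul_assoc]
      exact S_mul (adj T h0 hG) (P_mem Cs fun C hC => h C (by simp [hC]))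
        (by rw [lnP_cons]; omega)

lemma G_blocks (Cs : List (List ℕ)) (h : ∀ C ∈ Cs, IsG e n C) :
    ∃ bs, okB n bs ∧ bs.length = Cs.length ∧ lnB bs = lnP Cs ∧
      P e n Cs = Bl e (e n * e (n-1)) bs := by
  induction Cs with
  | nil => exact ⟨[], by simp [okB], rfl, rfl, rfl⟩
  | cons C Cs ih =>
    obtain ⟨bs, h1, h2, h3, h4⟩ := ih fun C hC => h C (by simp [hC])
    obtain ⟨X, Z, hX, hZ, hl, he⟩ := h C (by simp)
    refine ⟨(X, Z) :: bs, ?_, by simp [h2], ?_, ?_⟩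
    · intro p hp
      rcases List.mem_cons.1 hp with rfl | hp
      · exact ⟨fun i hi => (hX i hi).2, hZ⟩
      · exact h1 p hp
    · rw [lnP_cons, ← h3]; simp [lnB]; omega
    · rw [P_cons, h4, he, ← mul_assoc, ← mul_assoc, en_comm T hX]
      simp [Bl, mul_assoc]

lemma Al_one {C : List ℕ} (h : IsAl e n C) :
    ∃ X Z : List ℕ, (∀ i ∈ X, i + 2 ≤ n) ∧ (∀ i ∈ Z, i + 2 ≤ n) ∧
      X.length + Z.length + 1 = C.length ∧
      W e C * e n = W e X * (e (n-1) * e n) * W e Z := by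
  have hn := T.hn
  obtain ⟨X, Z, hX, hZ, hl, he⟩ := h
  refine ⟨X ++ List.range' 0 (n-1), Z, ok_app (fun i hi => (hX i hi).2) fun i hi => ?_,
    fun i hi => (hZ i hi).2, by simp; omega, ?_⟩
  · rw [List.mem_range'_1] at hi; omega
  · rw [he, mul_assoc, ← en_comm T hZ, W_append]
    simp only [mul_assoc]

lemma Al_blocks (Cs : List (List ℕ)) (h : ∀ C ∈ Cs, IsAl e n C) :
    ∃ bs, okB n bs ∧ lnB bs = lnP Cs ∧
      P e n Cs * e n = e n * Bl e (e (n-1) * e n) bs := by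
  induction Cs with
  | nil => exact ⟨[], by simp [okB], rfl, by simp [P, Bl]⟩
  | cons C Cs ih =>
    obtain ⟨bs, h1, h3, h4⟩ := ih fun C hC => h C (by simp [hC])
    obtain ⟨X, Z, hX, hZ, hl, he⟩ := Al_one T (h C (by simp))
    refine ⟨(X, Z) :: bs, ?_, ?_, ?_⟩
    · intro p hp
      rcases List.mem_cons.1 hp with rfl | hp
      · exact ⟨hX, hZ⟩
      · exact h1 p hp
    · rw [lnP_cons, ← h3]; simp [lnB]; omega
    · rw [P_cons, mul_assoc, h4, mul_assoc, ← mul_assoc (W e C), he]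
      simp [Bl, mul_assoc]

lemma D_P {D : A →ₗ[K] K} {B : Subalgebra K A} (M : MData u n e D B)
    (Cs : List (List ℕ)) (h : ∀ C ∈ Cs, ∀ i ∈ C, i < n) (h0 : Cs ≠ [])
    (hD : ∀ k, k < lnP Cs → ∀ x ∈ S K e n ^ k, D x = 0) : D (P e n Cs) = 0 := by
  have rot : ∀ l1 l2 : List (List ℕ), D (P e n (l1 ++ l2)) = D (P e n (l2 ++ l1)) := by
    intro l1 l2
    rw [P_append, P_append, M.tr]
  by_cases hr1 : ∃ C ∈ Cs, R1 K e n C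
  · obtain ⟨C, hC, k, hk, hm⟩ := hr1
    obtain ⟨l1, l2, rfl⟩ := List.append_of_mem hC
    rw [rot, List.cons_append, P_cons]
    refine hD (1 + k + lnP (l2 ++ l1)) ?_ _ ?_
    · simp only [lnP_append, lnP_cons]; omega
    · refine S_mul (S_mul (S_e le_rfl) hm le_rfl) (P_mem _ fun C hC => h C ?_) le_rfl
      simp at hC ⊢; tauto
  by_cases hr2 : ∃ C ∈ Cs, R2 K e n C
  · obtain ⟨C, hC, hlt, hm⟩ := hr2
    obtain ⟨l1, l2, rfl⟩ := List.append_of_mem hC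
    rw [rot, List.cons_append]
    have hl : lnP (l1 ++ C :: l2) = C.length + 1 + lnP (l2 ++ l1) := by
      simp only [lnP_append, lnP_cons]; omega
    have hok : ∀ C ∈ l2 ++ l1, ∀ i ∈ C, i < n := fun C hC => h C (by simp at hC ⊢; tauto)
    rw [hl] at hD
    generalize l2 ++ l1 = l at hD hok
    cases l with
    | nil =>
      have hCB := W_memB M.he hlt
      have : P e n [C] = ep u e n * W e C + 1 * e (n-1) * W e C
        - u • (1 * e (n-1) * (ep u e n * W e C)) - ep u e n * e (n-1) * W e C := by
        have h3 := en_eq T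
        calc P e n [C] = e n * W e C := by simp [P]
          _ = (ep u e n + e (n-1) - u • (e (n-1) * ep u e n) - ep u e n * e (n-1)) * W e C := by
            rw [← h3]
          _ = _ := by
            simp only [sub_mul, add_mul, one_mul, smul_mul_assoc, mul_assoc]
      rw [this, map_sub, map_sub, map_add, map_smul, M.hB _ (B.mul_mem M.hep hCB),
        M.hBB _ B.one_mem _ hCB, M.hBB _ B.one_mem _ (B.mul_mem M.hep hCB),
        M.hBB _ M.hep _ hCB]
      simp
    | cons C2 l =>
      rw [P_cons, P_cons, ← mul_assoc, ← mul_assoc]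
      rw [lnP_cons] at hD
      refine hD (C.length + 1 + C2.length + lnP l) (by omega) _ ?_
      exact S_mul (S_mul hm (S_W fun i hi => (hok C2 (by simp) i hi).le) le_rfl)
        (P_mem _ fun C hC => hok C (by simp [hC])) le_rfl
  have hc : ∀ C ∈ Cs, IsAl e n C ∨ IsG e n C := by
    intro C hC
    rcases classify T C (h C hC) with h1 | h1 | h1 | h1
    · exact absurd ⟨C, hC, h1⟩ hr1
    · exact absurd ⟨C, hC, h1⟩ hr2
    · exact Or.inr h1
    · exact Or.inl h1
  by_cases hA : ∀ C ∈ Cs, IsAl e n C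
  · cases Cs with
    | nil => exact absurd rfl h0
    | cons C l =>
      obtain ⟨bs, b1, b3, b4⟩ := Al_blocks T l fun C hC => hA C (by simp [hC])
      obtain ⟨X, Z, hX, hZ, hl, he⟩ := Al_one T (hA C (by simp))
      have g := good_up T M ((X, Z) :: bs) (by
        intro p hp
        rcases List.mem_cons.1 hp with rfl | hp
        · exact ⟨hX, hZ⟩
        · exact b1 p hp) (by simp) (by
        have : lnB ((X, Z) :: bs) = lnP (C :: l) := by
          rw [lnP_cons, ← b3]; simp [lnB]; omega
        rw [this]; exact hD)
      rw [P_cons, mul_assoc, M.tr, mul_assoc, b4, ← mul_assoc, he]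
      simpa [Bl] using g
  by_cases hG : ∀ C ∈ Cs, IsG e n C
  · obtain ⟨bs, b1, b2, b3, b4⟩ := G_blocks T Cs hG
    rw [b4]
    refine good_down T M bs b1 ?_ (by rw [b3]; exact hD)
    rintro rfl
    exact h0 (List.length_eq_zero_iff.1 b2.symm)
  · push Not at hG
    obtain ⟨C, hC, hCG⟩ := hG
    have hCA := (hc C hC).resolve_right hCG
    obtain ⟨l1, l2, rfl⟩ := List.append_of_mem hC
    rw [rot, List.cons_append]
    refine hD (C.length + lnP (l2 ++ l1)) ?_ _ ?_
    · simp only [lnP_append, lnP_cons]; omega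
    · refine P_adj T (l2 ++ l1) (fun C hC => h C (by simp at hC ⊢; tauto))
        (fun C hC => hc C (by simp at hC ⊢; tauto)) C (h C hC) hCA ?_
      intro hh
      apply hA
      intro C' hC'
      rcases List.mem_append.1 hC' with h | h
      · exact hh C' (by simp [h])
      · rcases List.mem_cons.1 h with rfl | h
        · exact hCA
        · exact hh C' (by simp [h])

omit T in
lemma split_word (w : List ℕ) (hw : ∀ i ∈ w, i ≤ n) : ∃ (C0 : List ℕ) (Cs : List (List ℕ)),
    (∀ i ∈ C0, i < n) ∧ (∀ C ∈ Cs, ∀ i ∈ C, i < n) ∧ C0.length + lnP Cs = w.length ∧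
    W e w = W e C0 * P e n Cs := by
  induction w with
  | nil => exact ⟨[], [], by simp, by simp, rfl, by simp [P]⟩
  | cons a w ih =>
    obtain ⟨C0, Cs, h1, h2, h3, h4⟩ := ih fun i hi => hw i (by simp [hi])
    by_cases ha : a = n
    · subst ha
      refine ⟨[], C0 :: Cs, by simp, ?_, ?_, ?_⟩
      · intro C hC
        rcases List.mem_cons.1 hC with rfl | h
        · exact h1
        · exact h2 C h
      · rw [lnP_cons]; simp; omega
      · rw [W_cons, h4, P_cons]; simp [mul_assoc]
    · have := hw a (by simp)
      refine ⟨a :: C0, Cs, ?_, h2, by simp; omega, by rw [W_cons, h4, W_cons, mul_assoc]⟩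
      intro i hi
      rcases List.mem_cons.1 hi with rfl | h
      · omega
      · exact h1 i h

lemma D_word {D : A →ₗ[K] K} {B : Subalgebra K A} (M : MData u n e D B)
    (w : List ℕ) (hw : ∀ i ∈ w, i ≤ n)
    (hD : ∀ k, k < w.length → ∀ x ∈ S K e n ^ k, D x = 0) : D (W e w) = 0 := by
  have hn := T.hn
  obtain ⟨C0, Cs, h1, h2, h3, h4⟩ := split_word (e := e) w hw
  rw [h4, M.tr]
  rw [← h3] at hD
  clear h3 h4
  induction Cs using List.reverseRecOn with
  | nil =>
    have e0 : P e n [] * W e C0 = W e C0 := by simp [P]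
    have l0 : lnP [] = 0 := rfl
    rw [l0] at hD
    rw [e0]
    by_cases hm : n - 1 ∈ C0
    · obtain ⟨X, Z, rfl, hX⟩ := List.eq_append_cons_of_mem hm
      by_cases hm2 : n - 1 ∈ Z
      · obtain ⟨Y, Z, rfl, hY⟩ := List.eq_append_cons_of_mem hm2
        have hr : R1 K e n (X ++ (n-1) :: (Y ++ (n-1) :: Z)) := by
          refine R1_of_mid T (fun i hi => (h1 i hi).le) (X := X) (Y := (n-1) :: Y ++ [n-1])
            (Z := Z) (by simp) ⟨Y.length + 1, by simp, ?_⟩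
          have := red_hi T (n-1) (by omega) Y (fun i hi => by
            have := h1 i (by simp [hi])
            have : i ≠ n - 1 := fun hh => hY (hh ▸ hi)
            omega)
          simpa [mul_assoc] using this
        obtain ⟨k, hk, hkm⟩ := hr
        exact hD k (by omega) _ hkm
      · have hXZ : ∀ i ∈ X ++ Z, i + 2 ≤ n := fun i hi => by
          have h3 := h1 i (by simp at hi ⊢; tauto)
          have : i ≠ n - 1 := by
            rintro rfl
            simp at hi; tauto
          omega
        have := M.hBB _ (W_memB M.he fun i hi => hXZ i (List.mem_append_left Z hi)) _
          (W_memB M.he fun i hi => hXZ i (List.mem_append_right X hi))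
        simpa [mul_assoc] using this
    · refine M.hB _ (W_memB M.he fun i hi => ?_)
      have := h1 i hi
      have : i ≠ n - 1 := fun hh => hm (hh ▸ hi)
      omega
  | append_singleton l C ih =>
    clear ih
    have e1 : P e n (l ++ [C]) * W e C0 = P e n (l ++ [C ++ C0]) := by
      simp [P, mul_assoc]
    rw [e1]
    refine D_P T M _ ?_ (by simp) ?_
    · intro C' hC'
      rcases List.mem_append.1 hC' with h | h
      · exact h2 C' (by simp [h])
      · rw [List.mem_singleton] at h
        subst h
        intro i hi
        rcases List.mem_append.1 hi with h | h
        · exact h2 C (by simp) i h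
        · exact h1 i h
    · intro k hk
      refine hD k ?_
      simp only [lnP_append, lnP_cons, List.length_append] at hk ⊢
      omega

lemma D_S {D : A →ₗ[K] K} {B : Subalgebra K A} (M : MData u n e D B) (L : ℕ) :
    ∀ x ∈ S K e n ^ L, D x = 0 := by
  induction L using Nat.strong_induction_on with
  | _ L ih =>
    intro x hx
    replace hx := S_le_span L hx
    induction hx using Submodule.span_induction with
    | mem x hx =>
      obtain ⟨w, hw, hl, rfl⟩ := hx
      exact D_word T M w hw fun k hk => ih k (by omega)
    | zero => simp
    | add x y _ _ hx hy => 
      rw [map_add, hx, hy, add_zero]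
    | smul c x _ hx => rw [map_smul, hx, smul_zero]

end
end Core

section
variable {K : Type*} [CommRing K] (q : K) (n : ℕ)

/-- The idempotent-type generators. -/
noncomputable def ee (i : ℕ) : ATL K q (n+1) :=
  if h : i < n + 1 then g q (n+1) ⟨i, h⟩ + 1 else 0

lemma ee_eq {i : ℕ} (h : i < n + 1) : ee q n i = g q (n+1) ⟨i, h⟩ + 1 := by simp [ee, h]

lemma g_quad (hn : 2 ≤ n) (i : Fin (n+1)) :
    g q (n+1) i * g q (n+1) i = (q - 1) • g q (n+1) i + q • 1 := by
  have := RingQuot.mkAlgHom_rel K (ATLRel.quad (q := q) (m := n+1) (by omega) i)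
  simpa [g, Algebra.algebraMap_eq_smul_one] using this

lemma g_comm (hn : 2 ≤ n) (i j : Fin (n+1)) (h1 : i ≠ j) (h2 : j ≠ csucc i) (h3 : i ≠ csucc j) :
    g q (n+1) i * g q (n+1) j = g q (n+1) j * g q (n+1) i := by
  have := RingQuot.mkAlgHom_rel K (ATLRel.comm (q := q) (m := n+1) (by omega) i j h1 h2 h3)
  simpa [g] using this

lemma g_braid (hn : 2 ≤ n) (i : Fin (n+1)) :
    g q (n+1) i * g q (n+1) (csucc i) * g q (n+1) i =
      g q (n+1) (csucc i) * g q (n+1) i * g q (n+1) (csucc i) := by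
  have := RingQuot.mkAlgHom_rel K (ATLRel.braid (q := q) (m := n+1) (by omega) i)
  simpa [g] using this

lemma g_vrel (hn : 2 ≤ n) (i : Fin (n+1)) :
    g q (n+1) i * g q (n+1) (csucc i) * g q (n+1) i + g q (n+1) i * g q (n+1) (csucc i) +
      g q (n+1) (csucc i) * g q (n+1) i + g q (n+1) i + g q (n+1) (csucc i) + 1 = 0 := by
  have := RingQuot.mkAlgHom_rel K (ATLRel.vrel (q := q) (m := n+1) (by omega) i)
  simpa [g] using this

lemma g_up (hn : 2 ≤ n) (i : Fin (n+1)) :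
    (g q (n+1) i + 1) * (g q (n+1) (csucc i) + 1) * (g q (n+1) i + 1) =
      q • (g q (n+1) i + 1) := by
  have h1 := g_vrel q n hn i
  have h2 := g_quad q n hn i
  generalize g q (n+1) i = x at *
  generalize g q (n+1) (csucc i) = y at *
  have : (x + 1) * (y + 1) * (x + 1) = (x * y * x + x * y + y * x + x + y + 1) + (x * x + x) := by
    noncomm_ring
  rw [this, h1, h2]
  module

lemma g_dn (hn : 2 ≤ n) (i : Fin (n+1)) :
    (g q (n+1) (csucc i) + 1) * (g q (n+1) i + 1) * (g q (n+1) (csucc i) + 1) =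
      q • (g q (n+1) (csucc i) + 1) := by
  have h1 := g_vrel q n hn i
  have h2 := g_quad q n hn (csucc i)
  have h3 := g_braid q n hn i
  generalize g q (n+1) i = x at *
  generalize g q (n+1) (csucc i) = y at *
  have : (y + 1) * (x + 1) * (y + 1) = (y * x * y + x * y + y * x + x + y + 1) + (y * y + y) := by
    noncomm_ring
  rw [this, ← h3, h1, h2]
  module

lemma csucc_lt {i : ℕ} (h : i < n) :
    csucc (⟨i, by omega⟩ : Fin (n+1)) = ⟨i+1, by omega⟩ := by
  simp only [csucc, Fin.mk.injEq]
  exact Nat.mod_eq_of_lt (by omega)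

lemma csucc_last : csucc (⟨n, by omega⟩ : Fin (n+1)) = ⟨0, by omega⟩ := by
  simp [csucc]

lemma tlData (u : K) (uq : u * q = 1) (hn : 2 ≤ n) : Core.TLData q u n (ee q n) where
  hn := hn
  uq := uq
  sq i hi := by
    rw [ee_eq q n (by omega)]
    have h2 := g_quad q n hn ⟨i, by omega⟩
    generalize g q (n+1) ⟨i, _⟩ = x at *
    have : (x + 1) * (x + 1) = x * x + 2 • x + 1 := by noncomm_ring
    rw [this, h2]
    module
  up i hi := by
    rw [ee_eq q n (by omega), ee_eq q n (by omega), ← csucc_lt n hi]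
    exact g_up q n hn _
  dn i hi := by
    rw [ee_eq q n (by omega), ee_eq q n (by omega), ← csucc_lt n hi]
    exact g_dn q n hn _
  cy := by
    rw [ee_eq q n (by omega), ee_eq q n (by omega), ← csucc_last n]
    exact g_up q n hn _
  cm i j h1 h2 h3 := by
    rw [ee_eq q n (by omega), ee_eq q n (by omega)]
    have := g_comm q n hn ⟨i, by omega⟩ ⟨j, by omega⟩ (by simp; omega)
      (by rw [csucc_lt n (by omega)]; simp; omega) (by
        rcases Nat.lt_or_ge j n with h | h
        · rw [csucc_lt n h]; simp; omega
        · have : j = n := by omega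
          subst this
          rw [csucc_last]; simp; omega)
    generalize g q (n+1) ⟨i, _⟩ = x at *
    generalize g q (n+1) ⟨j, _⟩ = y at *
    simp only [mul_add, add_mul, this, mul_one, one_mul]
    abel

lemma exists_mem_S (x : ATL K q (n+1)) : ∃ L, x ∈ Core.S K (ee q n) n ^ L := by
  obtain ⟨y, rfl⟩ := RingQuot.mkAlgHom_surjective K (ATLRel q (n+1)) x
  induction y using FreeAlgebra.induction with
  | grade0 r =>
    refine ⟨0, ?_⟩
    rw [AlgHom.commutes, Algebra.algebraMap_eq_smul_one]
    exact Submodule.smul_mem _ _ Core.S_one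
  | grade1 i =>
    refine ⟨1, ?_⟩
    have h : ee q n i.val ∈ Core.S K (ee q n) n ^ 1 := Core.S_e (by omega)
    have := Submodule.sub_mem _ h Core.S_one
    rw [ee_eq q n i.isLt, add_sub_cancel_right] at this
    exact this
  | mul a b ha hb =>
    obtain ⟨k, hk⟩ := ha
    obtain ⟨l, hl⟩ := hb
    exact ⟨k + l, by rw [map_mul]; exact Core.S_mul hk hl le_rfl⟩
  | add a b ha hb =>
    obtain ⟨k, hk⟩ := ha
    obtain ⟨l, hl⟩ := hb
    exact ⟨k + l, by
      rw [map_add]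
      exact Submodule.add_mem _ (Core.S_mono (by omega) hk) (Core.S_mono (by omega) hl)⟩

end
end AffineTL

open AffineTL in
/-- Theorem 5.1.1: for `n ≥ 2`, a trace on `TLhat_{n+1}(q)` is uniquely
determined by its values on Markov elements. -/
theorem statement12 {K : Type*} [CommRing K] [IsDomain K] [CharZero K]
    (q sq : K) (hsq : sq * sq = q) (hq : IsUnit q) (hq1 : IsUnit (q + 1))
    (n : ℕ) (hn : 2 ≤ n)
    (F : ATL K q n →ₐ[K] ATL K q (n + 1)) (hF : isF q n hn F)
    (τ τ' : ATL K q (n + 1) →ₗ[K] K) (hτ : IsTrace τ) (hτ' : IsTrace τ')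
    (hMarkov : ∀ m : ATL K q (n + 1), IsMarkov n (by omega) F m → τ m = τ' m) :
    τ = τ' := by
  have uq : Ring.inverse q * q = 1 := Ring.inverse_mul_cancel q hq
  have T := tlData q n (Ring.inverse q) uq hn
  have hgg : ee q n (n - 1) = g q (n + 1) ⟨n - 1, by omega⟩ + 1 := ee_eq q n (by omega)
  have hd0 : ∀ a ∈ F.range, ∀ b ∈ F.range, (τ - τ') (a * b) = 0 := by
    intro a ha b hb
    rw [LinearMap.sub_apply, sub_eq_zero]
    exact hMarkov _ ⟨a, b, ha, hb, Or.inl rfl⟩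
  have hd1 : ∀ a ∈ F.range, ∀ b ∈ F.range,
      (τ - τ') (a * g q (n + 1) ⟨n - 1, by omega⟩ * b) = 0 := by
    intro a ha b hb
    rw [LinearMap.sub_apply, sub_eq_zero]
    exact hMarkov _ ⟨a, b, ha, hb, Or.inr rfl⟩
  have M : Core.MData (Ring.inverse q) n (ee q n) (τ - τ') F.range := by
    refine ⟨?_, ?_, ?_, ?_, ?_⟩
    · intro x y
      rw [LinearMap.sub_apply, LinearMap.sub_apply, hτ x y, hτ' x y]
    · intro b hb
      simpa using hd0 b hb 1 F.range.one_mem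
    · intro a ha b hb
      rw [hgg, mul_add, add_mul, mul_one, map_add, hd1 a ha b hb, hd0 a ha b hb, add_zero]
    · intro i hi
      rw [ee_eq q n (by omega)]
      refine F.range.add_mem ⟨_, hF.1 i (by omega)⟩ F.range.one_mem
    · have h : F (g q n ⟨n - 1, by omega⟩ + 1) = Core.ep (Ring.inverse q) (ee q n) n := by
        rw [map_add, map_one, hF.2, Core.ep, hgg, ee_eq q n (i := n) (by omega), qinv]
        have h4 := g_vrel q n hn ⟨n - 1, by omega⟩
        rw [csucc_lt n (by omega)] at h4
        have h5 : (⟨n - 1 + 1, by omega⟩ : Fin (n+1)) = ⟨n, by omega⟩ := by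
          ext; simp; omega
        rw [h5] at h4
        generalize g q (n+1) ⟨n - 1, _⟩ = x at *
        generalize g q (n+1) ⟨n, _⟩ = y at *
        generalize Ring.inverse q = u at *
        have h6 : x * y * x = -(x * y + y * x + x + y + 1) := by
          rw [eq_neg_iff_add_eq_zero, ← h4]; abel
        rw [Algebra.algebraMap_eq_smul_one, mul_smul_comm, mul_sub, mul_smul_comm, mul_one, h6,
          smul_sub, smul_smul, mul_sub, uq]
        simp only [mul_add, add_mul, mul_one, one_mul]
        module
      exact ⟨_, h⟩
  ext x
  obtain ⟨L, hL⟩ := exists_mem_S q n x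
  have := Core.D_S T M L x hL
  rwa [LinearMap.sub_apply, sub_eq_zero] at this
end
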